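/- arXiv:2510.14582 — 2 statements merged into one kernel-verified Lean document; each statement's English description precedes it below -/
import Mathlib

section
/- Let G be the CPDAG of the Markov equivalence class of a DAG, and let X and Y be distinct nodes. Then X is an ancestor of Y in at least one DAG of the Markov equivalence class represented by G if and only if there is a possibly directed path from X to Y in G. -/
/-- A directed acyclic graph on node set `V`: a directed edge relation with no
directed cycles (no edge `a → b` together with a directed path from `b` back to `a`). -/
structure Dag (V : Type*) where
  edge : V → V → Prop
  acyclic : ∀ a b : V, edge a b → ¬ Relation.ReflTransGen edge b a

variable {V : Type*}

namespace Dag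

/-- `a` is an ancestor of `b` (equivalently, `b` is a descendant of `a`):
there is a directed path from `a` to `b`; every node is its own ancestor. -/
def Anc (D : Dag V) (a b : V) : Prop := Relation.ReflTransGen D.edge a b

/-- `a` and `b` are adjacent (joined by an edge in either direction). -/
def Adj (D : Dag V) (a b : V) : Prop := D.edge a b ∨ D.edge b a

/-- The parents of `x` in the DAG `D`. -/
def Pa (D : Dag V) (x : V) : Set V := {a | D.edge a x}

/-- The Markov blanket of `x`: parents, children, and parents of children of `x`
(excluding `x` itself). -/
def MB (D : Dag V) (x : V) : Set V :=
  {v | v ≠ x ∧ (D.edge v x ∨ D.edge x v ∨ ∃ c : V, D.edge x c ∧ D.edge v c)}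

end Dag

/-- A path between `x` and `y` with respect to an adjacency relation `A`:
a sequence of distinct nodes, starting at `x` and ending at `y`, in which
consecutive nodes are adjacent. `n` is the number of edges of the path. -/
structure GPath (A : V → V → Prop) (x y : V) where
  n : ℕ
  f : Fin (n + 1) → V
  inj : Function.Injective f
  first : f ⟨0, by omega⟩ = x
  last : f ⟨n, by omega⟩ = y
  adj : ∀ i : Fin n, A (f i.castSucc) (f i.succ)

namespace GPath

/-- The non-endpoint node at position `i` of the path `p` is a collider with respect
to the directed edge relation `E`: both incident edges of the path point into it. -/
def ColliderAt {A : V → V → Prop} {x y : V} (p : GPath A x y)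
    (E : V → V → Prop) (i : ℕ) : Prop :=
  ∃ (_ : 0 < i) (_ : i < p.n),
    E (p.f ⟨i - 1, by omega⟩) (p.f ⟨i, by omega⟩) ∧
    E (p.f ⟨i + 1, by omega⟩) (p.f ⟨i, by omega⟩)

/-- The path `p` is blocked by the node set `S` in the DAG `D`: it contains a
non-collider that lies in `S`, or a collider such that neither the collider nor any
of its descendants lies in `S`. -/
def Blocked {A : V → V → Prop} {x y : V} (p : GPath A x y)
    (D : Dag V) (S : Set V) : Prop :=
  ∃ (i : ℕ) (_ : 0 < i) (_ : i < p.n),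
    (¬ p.ColliderAt D.edge i ∧ p.f ⟨i, by omega⟩ ∈ S) ∨
    (p.ColliderAt D.edge i ∧ ∀ d : V, D.Anc (p.f ⟨i, by omega⟩) d → d ∉ S)

end GPath

namespace Dag

/-- `x` and `y` are d-separated by `S` in the DAG `D`: every path between `x` and `y`
is blocked by `S`. -/
def dSep (D : Dag V) (x y : V) (S : Set V) : Prop :=
  ∀ p : GPath D.Adj x y, p.Blocked D S

/-- Two DAGs on the same node set are Markov equivalent if they have exactly the same
d-separation relations. -/
def MEquiv (D D' : Dag V) : Prop :=
  ∀ (x y : V) (S : Set V), D.dSep x y S ↔ D'.dSep x y S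

/-- The edge between `a` and `b` is directed `a → b` in the CPDAG of the Markov
equivalence class of `D`: the edge `a → b` holds in every DAG Markov equivalent to `D`. -/
def CpDir (D : Dag V) (a b : V) : Prop :=
  ∀ D' : Dag V, D.MEquiv D' → D'.edge a b

/-- The edge between `a` and `b` is undirected (`a − b`) in the CPDAG: `a` and `b` are
adjacent (the CPDAG has the same adjacencies as the DAGs of the MEC) but the edge is not
directed either way in the CPDAG. -/
def CpUndir (D : Dag V) (a b : V) : Prop :=
  D.Adj a b ∧ ¬ D.CpDir a b ∧ ¬ D.CpDir b a

/-- `Pa_G(a)`: the nodes with a directed edge into `a` in the CPDAG. -/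
def CpPa (D : Dag V) (a : V) : Set V := {p | D.CpDir p a}

/-- `Ch_G(a)`: the nodes `b` with the edge directed `a → b` in the CPDAG. -/
def CpCh (D : Dag V) (a : V) : Set V := {c | D.CpDir a c}

/-- `Sib_G(a)`: the nodes joined to `a` by an undirected edge in the CPDAG. -/
def CpSib (D : Dag V) (a : V) : Set V := {s | D.CpUndir a s}

end Dag

namespace GPath

/-- `p` is a possibly directed path in the CPDAG: no edge on it is directed
backwards (as `V_i ← V_{i+1}`) in the CPDAG. -/
def CpPossiblyDirected {D : Dag V} {x y : V} (p : GPath D.Adj x y) : Prop :=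
  ∀ i : Fin p.n, ¬ D.CpDir (p.f i.succ) (p.f i.castSucc)

/-- `p` is a (fully) directed path in the CPDAG: every edge on it is directed
forwards in the CPDAG. -/
def CpDirected {D : Dag V} {x y : V} (p : GPath D.Adj x y) : Prop :=
  ∀ i : Fin p.n, D.CpDir (p.f i.castSucc) (p.f i.succ)

/-- `p` is a directed path from `x` to `y` in the DAG `D` itself. -/
def DirectedIn {D : Dag V} {x y : V} (p : GPath D.Adj x y) : Prop :=
  ∀ i : Fin p.n, D.edge (p.f i.castSucc) (p.f i.succ)

/-- `p` is unshielded: for every three consecutive nodes on it, the first and the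
third are non-adjacent. -/
def Unshielded {D : Dag V} {x y : V} (p : GPath D.Adj x y) : Prop :=
  ∀ (i : ℕ) (_ : i + 2 ≤ p.n), ¬ D.Adj (p.f ⟨i, by omega⟩) (p.f ⟨i + 2, by omega⟩)

end GPath

namespace Dag

/-- `x` is a possible ancestor of `y` in the CPDAG: there is a possibly directed path
from `x` to `y`. -/
def PossAn (D : Dag V) (x y : V) : Prop :=
  ∃ p : GPath D.Adj x y, p.CpPossiblyDirected

/-- `x` is an explicit ancestor of `y` in the CPDAG: there is a fully directed path
from `x` to `y` in the CPDAG. -/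
def ExplAn (D : Dag V) (x y : V) : Prop :=
  ∃ p : GPath D.Adj x y, p.CpDirected

/-- The CPDAG is amenable relative to `(x, y)`: every possibly directed path from
`x` to `y` starts with a directed edge out of `x`. -/
def Amenable (D : Dag V) (x y : V) : Prop :=
  ∀ p : GPath D.Adj x y, p.CpPossiblyDirected →
    ∀ _ : 0 < p.n, D.CpDir (p.f ⟨0, by omega⟩) (p.f ⟨1, by omega⟩)

/-- `S` is a valid adjustment set for `(x, y)` in the DAG `D`:
(i) no element of `S` is a descendant of any node `w ≠ x` lying on a directed path
from `x` to `y`, and (ii) every path between `x` and `y` that is not a directed path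
from `x` to `y` is blocked by `S`. -/
def ValidAdjustment (D : Dag V) (x y : V) (S : Set V) : Prop :=
  (∀ s ∈ S, ∀ w : V, w ≠ x → D.Anc x w → D.Anc w y → ¬ D.Anc w s) ∧
  (∀ p : GPath D.Adj x y, ¬ p.DirectedIn → p.Blocked D S)

/-- `Cn_D(x, y)`: the nodes `w ≠ x` lying on some directed path from `x` to `y` in `D`. -/
def Cn (D : Dag V) (x y : V) : Set V := {w | w ≠ x ∧ D.Anc x w ∧ D.Anc w y}

end Dag

namespace MecAux

theorem dag_irrefl (D : Dag V) {a : V} (h : D.edge a a) : False :=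
  D.acyclic a a h Relation.ReflTransGen.refl

theorem dag_asymm (D : Dag V) {a b : V} (h : D.edge a b) (h' : D.edge b a) : False :=
  D.acyclic a b h (Relation.ReflTransGen.single h')

theorem dag_three (D : Dag V) {a b c : V} (h : D.edge a b) (h' : D.edge b c)
    (h'' : D.edge c a) : False :=
  D.acyclic a b h ((Relation.ReflTransGen.single h').tail h'')

theorem adj_symm {D : Dag V} {a b : V} (h : D.Adj a b) : D.Adj b a := Or.symm h

theorem adj_ne {D : Dag V} {a b : V} (h : D.Adj a b) : a ≠ b := by
  rintro rfl
  exact h.elim (dag_irrefl D) (dag_irrefl D)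

/-- A graph whose edges increase a rank is acyclic. -/
theorem acyclic_of_rank {E : V → V → Prop} (r : V → ℕ) (h : ∀ a b, E a b → r a < r b)
    (a b : V) (hab : E a b) : ¬ Relation.ReflTransGen E b a := by
  intro hp
  have key : ∀ c, Relation.ReflTransGen E b c → r b ≤ r c := by
    intro c hc
    induction hc with
    | refl => exact le_rfl
    | tail _ h2 ih => exact ih.trans (h _ _ h2).le
  have := key a hp
  have := h a b hab
  omega

/-- rank function of a relation without cycles. -/
theorem exists_rank_of_trans [Fintype V] (E : V → V → Prop)
    (hac : ∀ a, ¬ Relation.TransGen E a a) :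
    ∃ r : V → ℕ, (∀ a b, E a b → r a < r b) ∧
      ∀ a b, (∀ c, Relation.TransGen E c a ↔ Relation.TransGen E c b) → r a = r b := by
  classical
  refine ⟨fun v => (Finset.univ.filter (fun c => Relation.TransGen E c v)).card, ?_, ?_⟩
  · intro a b hab
    apply Finset.card_lt_card
    rw [Finset.ssubset_iff_of_subset]
    · exact ⟨a, by simpa using Relation.TransGen.single hab, by simpa using hac a⟩
    · intro c hc
      simp only [Finset.mem_filter, Finset.mem_univ, true_and] at hc ⊢
      exact hc.tail hab
  · intro a b h
    simp only [h]

theorem transGen_irrefl (D : Dag V) (a : V) : ¬ Relation.TransGen D.edge a a := by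
  intro h
  obtain ⟨b, hab, hba⟩ := Relation.TransGen.head'_iff.1 h
  exact D.acyclic a b hab hba

theorem exists_inj_rank [Fintype V] (D : Dag V) :
    ∃ r : V → ℕ, Function.Injective r ∧ ∀ a b, D.edge a b → r a < r b := by
  classical
  obtain ⟨r, hr, -⟩ := exists_rank_of_trans D.edge (transGen_irrefl D)
  let e := Fintype.equivFin V
  let N := Fintype.card V
  refine ⟨fun v => N * r v + (e v : ℕ), ?_, ?_⟩
  · intro a b hab
    have ha : (e a : ℕ) < N := (e a).2
    have hb : (e b : ℕ) < N := (e b).2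
    have h1 : (N * r a + (e a : ℕ)) % N = (N * r b + (e b : ℕ)) % N := by
      simp only at hab; rw [hab]
    rw [Nat.mul_add_mod, Nat.mul_add_mod, Nat.mod_eq_of_lt ha, Nat.mod_eq_of_lt hb] at h1
    exact e.injective (Fin.ext h1)
  · intro a b hab
    have ha : (e a : ℕ) < N := (e a).2
    have h2 : N * (r a + 1) ≤ N * r b := Nat.mul_le_mul_left _ (hr a b hab)
    simp only
    rw [Nat.mul_add] at h2
    omega

/-! ### Bayes ball reachability -/

/-- `BB D S x v true` : an active walk from `x` to `v` ending with an edge into `v`;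
`false`: ending with an edge out of `v`. -/
inductive BB (D : Dag V) (S : Set V) (x : V) : V → Bool → Prop
  | startIn (w : V) : D.edge x w → BB D S x w true
  | startOut (w : V) : D.edge w x → BB D S x w false
  | chain (v w : V) : BB D S x v true → v ∉ S → D.edge v w → BB D S x w true
  | coll (v w : V) : BB D S x v true → v ∈ S → D.edge w v → BB D S x w false
  | fork (v w : V) : BB D S x v false → v ∉ S → D.edge v w → BB D S x w true
  | up (v w : V) : BB D S x v false → v ∉ S → D.edge w v → BB D S x w false

theorem bb_coll_desc {D : Dag V} {S : Set V} {x : V} {s : V} (hs : s ∈ S) {v : V}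
    (hv : D.Anc v s) : BB D S x v true → ∀ w, D.edge w v → BB D S x w false := by
  induction hv using Relation.ReflTransGen.head_induction_on with
  | refl => intro h w hw; exact BB.coll _ _ h hs hw
  | @head v v' hvv' _ ih =>
    intro h w hw
    by_cases hS : v ∈ S
    · exact BB.coll _ _ h hS hw
    · exact BB.up _ _ (ih (BB.chain _ _ h hS hvv') v hvv') hS hw

/-- active walks -/
def AW (D : Dag V) (S : Set V) (f : ℕ → V) (n : ℕ) : Prop :=
  (∀ i, i < n → D.Adj (f i) (f (i + 1))) ∧
  ∀ i, i + 1 < n →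
    ((D.edge (f i) (f (i + 1)) ∧ D.edge (f (i + 2)) (f (i + 1))) →
      ∃ s ∈ S, D.Anc (f (i + 1)) s) ∧
    (¬ (D.edge (f i) (f (i + 1)) ∧ D.edge (f (i + 2)) (f (i + 1))) → f (i + 1) ∉ S)

theorem bb_of_aw {D : Dag V} {S : Set V} {f : ℕ → V} {n : ℕ} (h : AW D S f n) :
    ∀ i, i < n → (D.edge (f i) (f (i + 1)) → BB D S (f 0) (f (i + 1)) true) ∧
      (D.edge (f (i + 1)) (f i) → BB D S (f 0) (f (i + 1)) false) := by
  intro i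
  induction i with
  | zero => intro _; exact ⟨BB.startIn _, BB.startOut _⟩
  | succ i ih =>
    intro hi
    obtain ⟨ih1, ih2⟩ := ih (by omega)
    obtain ⟨h1, h2⟩ := h.2 i hi
    have hadj := h.1 i (by omega)
    constructor
    · intro he
      have hn : f (i + 1) ∉ S := h2 (fun hc => dag_asymm D he hc.2)
      rcases hadj with ha | ha
      · exact BB.chain _ _ (ih1 ha) hn he
      · exact BB.fork _ _ (ih2 ha) hn he
    · intro he
      rcases hadj with ha | ha
      · obtain ⟨s, hs, hsa⟩ := h1 ⟨ha, he⟩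
        exact bb_coll_desc hs hsa (ih1 ha) _ he
      · exact BB.up _ _ (ih2 ha) (h2 (fun hc => dag_asymm D ha hc.1)) he

theorem aw_extend {D : Dag V} {S : Set V} {f : ℕ → V} {n : ℕ} (h : AW D S f (n + 1)) (w : V)
    (hw : D.Adj (f (n + 1)) w)
    (h1 : D.edge (f n) (f (n + 1)) → D.edge w (f (n + 1)) → f (n + 1) ∈ S)
    (h2 : ¬ (D.edge (f n) (f (n + 1)) ∧ D.edge w (f (n + 1))) → f (n + 1) ∉ S) :
    AW D S (fun k => if k ≤ n + 1 then f k else w) (n + 2) := by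
  constructor
  · intro i hi
    by_cases hin : i = n + 1
    · subst hin; simpa using hw
    · have e1 : i ≤ n + 1 := by omega
      have e2 : i + 1 ≤ n + 1 := by omega
      simp only [e1, e2, if_true]
      exact h.1 i (by omega)
  · intro i hi
    by_cases hin : i = n
    · subst hin
      have e1 : i ≤ i + 1 := by omega
      have e2 : ¬ (i + 2 ≤ i + 1) := by omega
      simp only [e1, e2, if_true, if_false, le_refl]
      exact ⟨fun hc => ⟨_, h1 hc.1 hc.2, Relation.ReflTransGen.refl⟩, h2⟩
    · have e1 : i ≤ n + 1 := by omega
      have e2 : i + 1 ≤ n + 1 := by omega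
      have e3 : i + 2 ≤ n + 1 := by omega
      simp only [e1, e2, e3, if_true]
      exact h.2 i (by omega)

theorem aw_of_bb {D : Dag V} {S : Set V} {x v : V} {d : Bool} (h : BB D S x v d) :
    ∃ n f, AW D S f (n + 1) ∧ f 0 = x ∧ f (n + 1) = v ∧
      (if d then D.edge (f n) (f (n + 1)) else D.edge (f (n + 1)) (f n)) := by
  have start : ∀ w, D.Adj x w → AW D S (fun k => if k = 0 then x else w) (0 + 1) := by
    intro w hw
    refine ⟨?_, ?_⟩
    · intro i hi
      have : i = 0 := by omega
      subst this; simpa using hw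
    · intro i hi; omega
  have ext : ∀ n f w (d : Bool), AW D S f (n + 1) → f 0 = x →
      (if d then D.edge (f (n + 1)) w else D.edge w (f (n + 1))) →
      (D.edge (f n) (f (n + 1)) → D.edge w (f (n + 1)) → f (n + 1) ∈ S) →
      (¬ (D.edge (f n) (f (n + 1)) ∧ D.edge w (f (n + 1))) → f (n + 1) ∉ S) →
      ∃ n f, AW D S f (n + 1) ∧ f 0 = x ∧ f (n + 1) = w ∧
      (if d then D.edge (f n) (f (n + 1)) else D.edge (f (n + 1)) (f n)) := by
    intro n f w d hf h0 hd h1 h2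
    refine ⟨n + 1, _, aw_extend hf w ?_ h1 h2, ?_, ?_, ?_⟩
    · cases d
      · right; simpa using hd
      · left; simpa using hd
    · simpa using h0
    · simp
    · simpa using hd
  induction h with
  | startIn w hw => exact ⟨0, _, start w (Or.inl hw), by simp, by simp, by simpa using hw⟩
  | startOut w hw => exact ⟨0, _, start w (Or.inr hw), by simp, by simp, by simpa using hw⟩
  | chain v w _ hS hw ih =>
    obtain ⟨n, f, hf, h0, rfl, hd⟩ := ih
    exact ext n f w true hf h0 (by simpa using hw) (fun _ h => (dag_asymm D h hw).elim)
      (fun _ => hS)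
  | coll v w _ hS hw ih =>
    obtain ⟨n, f, hf, h0, rfl, hd⟩ := ih
    simp only [if_true] at hd
    exact ext n f w false hf h0 (by simpa using hw) (fun _ _ => hS)
      (fun h => (h ⟨hd, hw⟩).elim)
  | fork v w _ hS hw ih =>
    obtain ⟨n, f, hf, h0, rfl, hd⟩ := ih
    exact ext n f w true hf h0 (by simpa using hw) (fun _ h => (dag_asymm D h hw).elim)
      (fun _ => hS)
  | up v w _ hS hw ih =>
    obtain ⟨n, f, hf, h0, rfl, hd⟩ := ih
    simp only [Bool.false_eq_true, if_false] at hd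
    exact ext n f w false hf h0 (by simpa using hw) (fun h _ => (dag_asymm D h hd).elim)
      (fun _ => hS)

/-- Cutting a loop out of an active walk. -/
theorem aw_cut {D : Dag V} {S : Set V} {f : ℕ → V} {n i j : ℕ} (h : AW D S f n)
    (hij : i < j) (hj : j ≤ n) (he : f i = f j) :
    AW D S (fun k => if k ≤ i then f k else f (k + (j - i))) (n - (j - i)) := by
  have hg1 : ∀ k, k ≤ i → (fun k => if k ≤ i then f k else f (k + (j - i))) k = f k := by
    intro k hk; simp [hk]
  have hg2 : ∀ k, i ≤ k → (fun k => if k ≤ i then f k else f (k + (j - i))) k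
      = f (k + (j - i)) := by
    intro k hk
    by_cases hki : k = i
    · subst hki
      have : k + (j - k) = j := by omega
      simp [this, he]
    · have : ¬ k ≤ i := by omega
      simp [this]
  generalize hg : (fun k => if k ≤ i then f k else f (k + (j - i))) = g at hg1 hg2
  clear hg
  constructor
  · intro k hk
    by_cases hki : k + 1 ≤ i
    · rw [hg1 k (by omega), hg1 _ hki]; exact h.1 k (by omega)
    · rw [hg2 k (by omega), hg2 (k + 1) (by omega)]
      have := h.1 (k + (j - i)) (by omega)
      have e : k + 1 + (j - i) = k + (j - i) + 1 := by omega
      rw [e]; exact this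
  · intro k hk
    rcases lt_trichotomy (k + 1) i with hki | hki | hki
    · rw [hg1 k (by omega), hg1 (k + 1) (by omega), hg1 (k + 2) (by omega)]
      exact h.2 k (by omega)
    · obtain ⟨p1, p2⟩ := h.2 k (by omega)
      obtain ⟨j', rfl⟩ : ∃ j', j = j' + 1 := ⟨j - 1, by omega⟩
      obtain ⟨q1, q2⟩ := h.2 j' (by omega)
      have e2 : g (k + 2) = f (j' + 2) := by
        rw [hg2 (k + 2) (by omega)]; congr 1; omega
      have e3 : f (k + 1) = f (j' + 1) := by rw [hki]; exact he
      rw [hg1 k (by omega), hg1 (k + 1) (by omega), e2]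
      constructor
      · rintro ⟨c1, c2⟩
        by_cases hc : D.edge (f (k + 2)) (f (k + 1))
        · exact p1 ⟨c1, hc⟩
        · have hout : D.edge (f (k + 1)) (f (k + 2)) :=
            (h.1 (k + 1) (by omega)).resolve_right hc
          by_contra hno
          have key : ∀ m, k + 1 + m < j' + 1 → D.Anc (f (k + 1)) (f (k + 1 + m)) ∧
              D.edge (f (k + 1 + m)) (f (k + 1 + m + 1)) := by
            intro m
            induction m with
            | zero => intro _; exact ⟨Relation.ReflTransGen.refl, hout⟩
            | succ m ih =>
              intro hm
              obtain ⟨ih1, ih2⟩ := ih (by omega)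
              have hanc : D.Anc (f (k + 1)) (f (k + 1 + m + 1)) := ih1.tail ih2
              refine ⟨hanc, ?_⟩
              have hadj := h.1 (k + 1 + m + 1) (by omega)
              rcases hadj with ha | ha
              · exact ha
              · exfalso
                obtain ⟨s, hs, hsa⟩ := (h.2 (k + 1 + m) (by omega)).1 ⟨ih2, ha⟩
                exact hno ⟨s, hs, hanc.trans hsa⟩
          obtain ⟨k1, k2⟩ := key (j' - (k + 1)) (by omega)
          have e4 : k + 1 + (j' - (k + 1)) = j' := by omega
          rw [e4] at k1 k2
          rw [← e3] at k2
          exact D.acyclic _ _ k2 k1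
      · intro hc
        by_cases hc1 : D.edge (f k) (f (k + 1))
        · rw [e3]
          exact q2 (fun hq => hc ⟨hc1, by rw [e3]; exact hq.2⟩)
        · exact p2 (fun hp => hc1 hp.1)
    · rw [hg2 k (by omega), hg2 (k + 1) (by omega), hg2 (k + 2) (by omega)]
      have := h.2 (k + (j - i)) (by omega)
      have e : k + 1 + (j - i) = k + (j - i) + 1 := by omega
      have e' : k + 2 + (j - i) = k + (j - i) + 2 := by omega
      rw [e, e']; exact this

theorem exists_inj_aw {D : Dag V} {S : Set V} {x y : V}
    (h : ∃ n f, AW D S f n ∧ f 0 = x ∧ f n = y) :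
    ∃ n f, AW D S f n ∧ f 0 = x ∧ f n = y ∧ ∀ i j, i < j → j ≤ n → f i ≠ f j := by
  classical
  obtain ⟨f, hf, h0, hn⟩ := Nat.find_spec h
  refine ⟨Nat.find h, f, hf, h0, hn, ?_⟩
  intro i j hij hj he
  refine Nat.find_min h (m := Nat.find h - (j - i)) (by omega)
    ⟨_, aw_cut hf hij hj he, ?_, ?_⟩
  · simpa using h0
  · by_cases hi : Nat.find h - (j - i) ≤ i
    · have h1 : j = Nat.find h := by omega
      have h2 : Nat.find h - (j - i) = i := by omega
      simp only [h2, le_refl, if_true]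
      rw [he, h1, hn]
    · simp only [hi, if_false]
      refine Eq.trans ?_ hn
      congr 1; omega

theorem not_dSep_iff (D : Dag V) {x y : V} (hxy : x ≠ y) (S : Set V) :
    ¬ D.dSep x y S ↔ ∃ d, BB D S x y d := by
  constructor
  · intro h
    unfold Dag.dSep at h
    push Not at h
    obtain ⟨p, hp⟩ := h
    let f : ℕ → V := fun k => if hk : k < p.n + 1 then p.f ⟨k, hk⟩ else y
    have hf : ∀ k (hk : k < p.n + 1), f k = p.f ⟨k, hk⟩ := fun k hk => dif_pos hk
    have haw : AW D S f p.n := by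
      constructor
      · intro i hi
        rw [hf i (by omega), hf (i + 1) (by omega)]
        exact p.adj ⟨i, hi⟩
      · intro i hi
        rw [hf i (by omega), hf (i + 1) (by omega), hf (i + 2) (by omega)]
        constructor
        · intro hc
          by_contra hno
          push Not at hno
          exact hp ⟨i + 1, by omega, hi, Or.inr ⟨⟨by omega, hi, hc.1, hc.2⟩,
            fun d hd hdS => hno d hdS hd⟩⟩
        · intro hc hS
          exact hp ⟨i + 1, by omega, hi, Or.inl ⟨fun ⟨_, _, c1, c2⟩ => hc ⟨c1, c2⟩, hS⟩⟩
    have h0 : f 0 = x := by rw [hf 0 (by omega)]; exact p.first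
    have hn : f p.n = y := by rw [hf p.n (by omega)]; exact p.last
    have hpos : 0 < p.n := by
      rcases Nat.eq_zero_or_pos p.n with h | h
      · rw [h] at hn; exact (hxy (h0.symm.trans hn)).elim
      · exact h
    obtain ⟨b1, b2⟩ := bb_of_aw haw (p.n - 1) (by omega)
    have e : p.n - 1 + 1 = p.n := by omega
    have hadj := haw.1 (p.n - 1) (by omega)
    rw [e, h0, hn] at b1 b2
    rw [e, hn] at hadj
    rcases hadj with ha | ha
    · exact ⟨_, b1 ha⟩
    · exact ⟨_, b2 ha⟩
  · rintro ⟨d, hd⟩ hsep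
    obtain ⟨n, f, hf, h0, hn, -⟩ := aw_of_bb hd
    obtain ⟨n, f, hf, h0, hn, hinj⟩ := exists_inj_aw ⟨_, f, hf, h0, hn⟩
    obtain ⟨i, hi0, hin, hb⟩ := hsep
      { n := n
        f := fun k => f k
        inj := by
          intro a b hab
          simp only at hab
          rcases lt_trichotomy (a : ℕ) b with h | h | h
          · exact (hinj _ _ h (by omega) hab).elim
          · exact Fin.ext h
          · exact (hinj _ _ h (by omega) hab.symm).elim
        first := h0
        last := hn
        adj := fun i => hf.1 i i.2 }
    obtain ⟨i, rfl⟩ : ∃ i', i = i' + 1 := ⟨i - 1, by omega⟩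
    simp only at hin hb
    obtain ⟨c1, c2⟩ := hf.2 i hin
    rcases hb with ⟨hb1, hb2⟩ | ⟨⟨_, _, e1, e2⟩, hb2⟩
    · exact c2 (fun hc => hb1 ⟨by omega, hin, hc.1, hc.2⟩) hb2
    · obtain ⟨s, hs, hsa⟩ := c1 ⟨e1, e2⟩
      exact hb2 s hsa hs

theorem not_dSep_self (D : Dag V) (x : V) (S : Set V) : ¬ D.dSep x x S := by
  intro h
  obtain ⟨i, h1, h2, -⟩ := h
    { n := 0
      f := fun _ => x
      inj := fun a b _ => Fin.ext (by omega)
      first := rfl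
      last := rfl
      adj := fun i => i.elim0 }
  simp only at h2
  omega

theorem not_dSep_of_adj (D : Dag V) {x y : V} (h : D.Adj x y) (S : Set V) : ¬ D.dSep x y S := by
  rw [not_dSep_iff D (adj_ne h)]
  rcases h with h | h
  · exact ⟨_, BB.startIn _ h⟩
  · exact ⟨_, BB.startOut _ h⟩

theorem dSep_parents (D : Dag V) {x y : V} (hne : x ≠ y) (hadj : ¬ D.Adj x y)
    (hanc : ¬ D.Anc x y) : D.dSep x y {p | D.edge p x} := by
  by_contra h
  rw [not_dSep_iff D hne] at h
  obtain ⟨d, hd⟩ := h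
  have key : ∀ v d, BB D {p | D.edge p x} x v d →
      (d = true → D.Anc x v) ∧ (d = false → D.edge v x) := by
    intro v d h
    induction h with
    | startIn w hw => exact ⟨fun _ => Relation.ReflTransGen.single hw, by simp⟩
    | startOut w hw => exact ⟨by simp, fun _ => hw⟩
    | chain v w _ hS hw ih => exact ⟨fun _ => (ih.1 rfl).tail hw, by simp⟩
    | coll v w _ hS hw ih => exact (D.acyclic _ _ hS (ih.1 rfl)).elim
    | fork v w _ hS hw ih => exact (hS (ih.2 rfl)).elim
    | up v w _ hS hw ih => exact (hS (ih.2 rfl)).elim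
  obtain ⟨k1, k2⟩ := key y d hd
  cases d
  · exact hadj (Or.inr (k2 rfl))
  · exact hanc (k1 rfl)

theorem exists_dSep (D : Dag V) {x y : V} (hne : x ≠ y) (hadj : ¬ D.Adj x y) :
    ∃ S, D.dSep x y S ∨ D.dSep y x S := by
  by_cases h : D.Anc x y
  · refine ⟨_, Or.inr (dSep_parents D hne.symm (fun h => hadj h.symm) ?_)⟩
    intro h'
    rcases Relation.ReflTransGen.cases_head h with h1 | ⟨c, h1, h2⟩
    · exact hne h1
    · exact D.acyclic _ _ h1 (h2.trans h')
  · exact ⟨_, Or.inl (dSep_parents D hne hadj h)⟩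

/-- Same skeleton and same v-structures. -/
def SameVS (D D' : Dag V) : Prop :=
  (∀ x y, D.Adj x y ↔ D'.Adj x y) ∧
  ∀ x y z, x ≠ z → ¬ D.Adj x z → (D.edge x y ∧ D.edge z y ↔ D'.edge x y ∧ D'.edge z y)

theorem mequiv_symm {D D' : Dag V} (h : D.MEquiv D') : D'.MEquiv D :=
  fun x y S => (h x y S).symm

theorem adj_of_mequiv {D D' : Dag V} (h : D.MEquiv D') {x y : V} (ha : D.Adj x y) :
    D'.Adj x y := by
  by_contra hn
  obtain ⟨S, hS | hS⟩ := exists_dSep D' (adj_ne ha) hn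
  · exact not_dSep_of_adj D ha S ((h x y S).2 hS)
  · exact not_dSep_of_adj D ha.symm S ((h y x S).2 hS)

theorem vs_of_mequiv {D D' : Dag V} (h : D.MEquiv D') {x y z : V} (hne : x ≠ z)
    (ha : ¬ D.Adj x z) (h1 : D.edge x y) (h2 : D.edge z y) : D'.edge x y ∧ D'.edge z y := by
  by_contra hn
  have ha' : ¬ D'.Adj x z := fun h' => ha (adj_of_mequiv (mequiv_symm h) h')
  have a1 : D'.Adj x y := adj_of_mequiv h (Or.inl h1)
  have a2 : D'.Adj z y := adj_of_mequiv h (Or.inl h2)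
  have aux : ∀ S, y ∉ S → (∃ d, BB D' S x z d) ∧ (∃ d, BB D' S z x d) := by
    intro S hS
    rcases a1 with a1 | a1
    · have a2 : D'.edge y z := a2.resolve_left (fun h => hn ⟨a1, h⟩)
      exact ⟨⟨_, BB.chain _ _ (BB.startIn _ a1) hS a2⟩, ⟨_, BB.up _ _ (BB.startOut _ a2) hS a1⟩⟩
    · rcases a2 with a2 | a2
      · exact ⟨⟨_, BB.up _ _ (BB.startOut _ a1) hS a2⟩,
          ⟨_, BB.chain _ _ (BB.startIn _ a2) hS a1⟩⟩
      · exact ⟨⟨_, BB.fork _ _ (BB.startOut _ a1) hS a2⟩,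
          ⟨_, BB.fork _ _ (BB.startOut _ a2) hS a1⟩⟩
  obtain ⟨S, hS | hS⟩ := exists_dSep D' hne ha'
  · have hy : y ∈ S := by
      by_contra hy
      exact (not_dSep_iff D' hne S).2 (aux S hy).1 hS
    exact (not_dSep_iff D hne S).2 ⟨_, BB.coll _ _ (BB.startIn _ h1) hy h2⟩ ((h _ _ _).2 hS)
  · have hy : y ∈ S := by
      by_contra hy
      exact (not_dSep_iff D' hne.symm S).2 (aux S hy).2 hS
    exact (not_dSep_iff D hne.symm S).2 ⟨_, BB.coll _ _ (BB.startIn _ h2) hy h1⟩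
      ((h _ _ _).2 hS)

theorem sameVS_of_mequiv {D D' : Dag V} (h : D.MEquiv D') : SameVS D D' := by
  refine ⟨fun x y => ⟨adj_of_mequiv h, adj_of_mequiv (mequiv_symm h)⟩, ?_⟩
  intro x y z hne ha
  refine ⟨fun hh => vs_of_mequiv h hne ha hh.1 hh.2, fun hh => ?_⟩
  exact vs_of_mequiv (mequiv_symm h) hne
    (fun h' => ha (adj_of_mequiv (mequiv_symm h) h')) hh.1 hh.2

/-! ### Covered edge reversal -/

/-- `D'` is obtained from `D` by reversing the covered edge `a → b`. -/
structure Flip (D D' : Dag V) (a b : V) : Prop where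
  cov : ∀ p, D.edge p b ↔ (D.edge p a ∨ p = a)
  edge' : ∀ x y, D'.edge x y ↔ ((D.edge x y ∧ ¬ (x = a ∧ y = b)) ∨ (x = b ∧ y = a))

theorem Flip.symm {D D' : Dag V} {a b : V} (h : Flip D D' a b) : Flip D' D b a := by
  have hab : D.edge a b := (h.cov a).2 (Or.inr rfl)
  have hne : a ≠ b := fun e => dag_irrefl D (e ▸ hab)
  have h1 := h.cov
  have h2 := h.edge'
  have h3 : ¬ D.edge b a := fun h => dag_asymm D hab h
  have h4 : ∀ x, ¬ D.edge x x := fun x h => dag_irrefl D h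
  constructor
  · intro p
    rw [h2, h2]
    grind
  · intro x y
    rw [h2]
    grind

theorem flip_bb {D D' : Dag V} {a b : V} (h : Flip D D' a b) {S : Set V} {x v : V} {d : Bool}
    (hv : BB D S x v d) :
    (v ≠ a → v ≠ b → BB D' S x v d) ∧
    (v = a → d = true → BB D' S x a true ∧ BB D' S x b true) ∧
    (v = b → d = false → BB D' S x b false) ∧
    (v = a → d = false → BB D' S x a false ∨ (BB D' S x a true ∧ BB D' S x b false ∧ b ∉ S) ∨
      (BB D' S x a true ∧ BB D' S x b true ∧ b ∈ S) ∨ x = a ∨ (x = b ∧ BB D' S x a true)) ∧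
    (v = b → d = true → (BB D' S x a true ∧ BB D' S x b true) ∨
      (BB D' S x a false ∧ a ∉ S ∧ BB D' S x b false) ∨
      (BB D' S x b false ∧ b ∉ S ∧ BB D' S x a true) ∨
      (x = a ∧ BB D' S x b false) ∨ (x = b ∧ BB D' S x a true)) := by
  have hab : D.edge a b := (h.cov a).2 (Or.inr rfl)
  have hne : a ≠ b := fun e => dag_irrefl D (e ▸ hab)
  have hba : D'.edge b a := (h.edge' b a).2 (Or.inr ⟨rfl, rfl⟩)
  have nba : ¬ D.edge b a := fun h => dag_asymm D hab h
  -- unchanged edges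
  have keep : ∀ p q, D.edge p q → (p = a → q ≠ b) → D'.edge p q := fun p q hpq hn =>
    (h.edge' p q).2 (Or.inl ⟨hpq, fun hh => hn hh.1 hh.2⟩)
  have pa : ∀ p, D.edge p a → D'.edge p a ∧ D'.edge p b := fun p hp =>
    ⟨keep p a hp (fun _ => hne),
      keep p b ((h.cov p).2 (Or.inl hp)) (fun e => (dag_irrefl D (e ▸ hp)).elim)⟩
  have pb : ∀ p, D.edge p b → p ≠ a → D'.edge p a ∧ D'.edge p b := fun p hp hpa =>
    pa p (((h.cov p).1 hp).resolve_right hpa)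
  have cir : ∀ p, ¬ D.edge p p := fun p h => dag_irrefl D h
  have r1 := @BB.startIn V D' S x
  have r2 := @BB.startOut V D' S x
  have r3 := @BB.chain V D' S x
  have r4 := @BB.coll V D' S x
  have r5 := @BB.fork V D' S x
  have r6 := @BB.up V D' S x
  induction hv with
  | startIn w hw =>
    refine ⟨?_, ?_, ?_, ?_, ?_⟩ <;> grind
  | startOut w hw =>
    refine ⟨?_, ?_, ?_, ?_, ?_⟩ <;> grind
  | chain v w _ hS hw ih =>
    have f1 := And.intro (r1 w) (r2 w)
    have f3 := And.intro (r3 v w) (And.intro (r3 a w) (r3 b w))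
    have f4 := And.intro (r4 v w) (And.intro (r4 a w) (r4 b w))
    have f5 := And.intro (r5 v w) (And.intro (r5 a w) (r5 b w))
    have f6 := And.intro (r6 v w) (And.intro (r6 a w) (r6 b w))
    have g3 := And.intro (r3 v a) (And.intro (r3 v b) (r3 b a))
    have g5 := And.intro (r5 v a) (And.intro (r5 v b) (r5 b a))
    have g4 := r4 a b
    have g6 := r6 a b
    have k1 := keep v w
    have k2 := keep w v
    have k3 := pa v
    have k4 := pa w
    have k5 := pb v
    have k6 := pb w
    have k7 := cir v
    clear r1 r2 r3 r4 r5 r6 keep pa pb cir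
    by_cases e1 : v = a
    · subst e1
      refine ⟨?_, ?_, ?_, ?_, ?_⟩ <;> grind
    · by_cases e2 : v = b
      · subst e2
        refine ⟨?_, ?_, ?_, ?_, ?_⟩ <;> grind
      · refine ⟨?_, ?_, ?_, ?_, ?_⟩ <;> grind
  | coll v w _ hS hw ih =>
    have f1 := And.intro (r1 w) (r2 w)
    have f3 := And.intro (r3 v w) (And.intro (r3 a w) (r3 b w))
    have f4 := And.intro (r4 v w) (And.intro (r4 a w) (r4 b w))
    have f5 := And.intro (r5 v w) (And.intro (r5 a w) (r5 b w))
    have f6 := And.intro (r6 v w) (And.intro (r6 a w) (r6 b w))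
    have g3 := And.intro (r3 v a) (And.intro (r3 v b) (r3 b a))
    have g5 := And.intro (r5 v a) (And.intro (r5 v b) (r5 b a))
    have g4 := r4 a b
    have g6 := r6 a b
    have k1 := keep v w
    have k2 := keep w v
    have k3 := pa v
    have k4 := pa w
    have k5 := pb v
    have k6 := pb w
    have k7 := cir v
    clear r1 r2 r3 r4 r5 r6 keep pa pb cir
    by_cases e1 : v = a
    · subst e1
      refine ⟨?_, ?_, ?_, ?_, ?_⟩ <;> grind
    · by_cases e2 : v = b
      · subst e2
        refine ⟨?_, ?_, ?_, ?_, ?_⟩ <;> grind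
      · refine ⟨?_, ?_, ?_, ?_, ?_⟩ <;> grind
  | fork v w _ hS hw ih =>
    have f1 := And.intro (r1 w) (r2 w)
    have f3 := And.intro (r3 v w) (And.intro (r3 a w) (r3 b w))
    have f4 := And.intro (r4 v w) (And.intro (r4 a w) (r4 b w))
    have f5 := And.intro (r5 v w) (And.intro (r5 a w) (r5 b w))
    have f6 := And.intro (r6 v w) (And.intro (r6 a w) (r6 b w))
    have g3 := And.intro (r3 v a) (And.intro (r3 v b) (r3 b a))
    have g5 := And.intro (r5 v a) (And.intro (r5 v b) (r5 b a))
    have g4 := r4 a b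
    have g6 := r6 a b
    have k1 := keep v w
    have k2 := keep w v
    have k3 := pa v
    have k4 := pa w
    have k5 := pb v
    have k6 := pb w
    have k7 := cir v
    clear r1 r2 r3 r4 r5 r6 keep pa pb cir
    by_cases e1 : v = a
    · subst e1
      refine ⟨?_, ?_, ?_, ?_, ?_⟩ <;> grind
    · by_cases e2 : v = b
      · subst e2
        refine ⟨?_, ?_, ?_, ?_, ?_⟩ <;> grind
      · refine ⟨?_, ?_, ?_, ?_, ?_⟩ <;> grind
  | up v w _ hS hw ih =>
    have f1 := And.intro (r1 w) (r2 w)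
    have f3 := And.intro (r3 v w) (And.intro (r3 a w) (r3 b w))
    have f4 := And.intro (r4 v w) (And.intro (r4 a w) (r4 b w))
    have f5 := And.intro (r5 v w) (And.intro (r5 a w) (r5 b w))
    have f6 := And.intro (r6 v w) (And.intro (r6 a w) (r6 b w))
    have g3 := And.intro (r3 v a) (And.intro (r3 v b) (r3 b a))
    have g5 := And.intro (r5 v a) (And.intro (r5 v b) (r5 b a))
    have g4 := r4 a b
    have g6 := r6 a b
    have k1 := keep v w
    have k2 := keep w v
    have k3 := pa v
    have k4 := pa w
    have k5 := pb v
    have k6 := pb w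
    have k7 := cir v
    clear r1 r2 r3 r4 r5 r6 keep pa pb cir
    by_cases e1 : v = a
    · subst e1
      refine ⟨?_, ?_, ?_, ?_, ?_⟩ <;> grind
    · by_cases e2 : v = b
      · subst e2
        refine ⟨?_, ?_, ?_, ?_, ?_⟩ <;> grind
      · refine ⟨?_, ?_, ?_, ?_, ?_⟩ <;> grind

theorem flip_conn {D D' : Dag V} {a b : V} (h : Flip D D' a b) {S : Set V} {x v : V}
    (hxv : x ≠ v) (hv : ∃ d, BB D S x v d) : ∃ d, BB D' S x v d := by
  obtain ⟨d, hv⟩ := hv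
  obtain ⟨h1, h2, h3, h4, h5⟩ := flip_bb h hv
  by_cases ha : v = a
  · subst ha
    cases d
    · rcases h4 rfl rfl with h | h | h | h | h
      · exact ⟨_, h⟩
      · exact ⟨_, h.1⟩
      · exact ⟨_, h.1⟩
      · exact (hxv h).elim
      · exact ⟨_, h.2⟩
    · exact ⟨_, (h2 rfl rfl).1⟩
  · by_cases hb : v = b
    · subst hb
      cases d
      · exact ⟨_, h3 rfl rfl⟩
      · rcases h5 rfl rfl with h | h | h | h | h
        · exact ⟨_, h.2⟩
        · exact ⟨_, h.2.2⟩
        · exact ⟨_, h.1⟩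
        · exact ⟨_, h.2⟩
        · exact (hxv h.1).elim
    · exact ⟨_, h1 ha hb⟩

theorem flip_mequiv {D D' : Dag V} {a b : V} (h : Flip D D' a b) : D.MEquiv D' := by
  intro x y S
  by_cases hxy : x = y
  · subst hxy
    exact iff_of_false (not_dSep_self D x S) (not_dSep_self D' x S)
  · rw [← not_iff_not, not_dSep_iff D hxy, not_dSep_iff D' hxy]
    exact ⟨flip_conn h hxy, flip_conn h.symm hxy⟩

theorem exists_flip [Fintype V] (D : Dag V) {a b : V}
    (cov : ∀ p, D.edge p b ↔ (D.edge p a ∨ p = a)) : ∃ D' : Dag V, Flip D D' a b := by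
  classical
  obtain ⟨r, -, hr⟩ := exists_inj_rank D
  have hab : D.edge a b := (cov a).2 (Or.inr rfl)
  have hne : a ≠ b := fun e => dag_irrefl D (e ▸ hab)
  have hrab := hr _ _ hab
  refine ⟨⟨fun x y => (D.edge x y ∧ ¬ (x = a ∧ y = b)) ∨ (x = b ∧ y = a), ?_⟩,
    ⟨cov, fun x y => Iff.rfl⟩⟩
  apply acyclic_of_rank (fun v => if v = b then 2 * r a else 2 * r v + 1)
  rintro x y (⟨hxy, hn⟩ | ⟨rfl, rfl⟩)
  · have hlt := hr _ _ hxy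
    by_cases hy : y = b
    · subst hy
      have hxa : D.edge x a := ((cov x).1 hxy).resolve_right (fun h => hn ⟨h, rfl⟩)
      have h1 := hr _ _ hxa
      have hxb : x ≠ y := by rintro rfl; exact dag_irrefl D hxy
      simp only [hxb, if_false, if_true]
      omega
    · by_cases hx : x = b
      · subst hx
        simp only [hy, if_false, if_true]
        omega
      · simp only [hx, hy, if_false]
        omega
  · simp [hne]

theorem sameVS_symm {D D' : Dag V} (h : SameVS D D') : SameVS D' D :=
  ⟨fun x y => (h.1 x y).symm, fun x y z hne ha =>
    (h.2 x y z hne (fun h' => ha ((h.1 x z).1 h'))).symm⟩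

theorem sameVS_trans {D D' D'' : Dag V} (h : SameVS D D') (h' : SameVS D' D'') :
    SameVS D D'' :=
  ⟨fun x y => (h.1 x y).trans (h'.1 x y), fun x y z hne ha =>
    (h.2 x y z hne ha).trans (h'.2 x y z hne (fun h'' => ha ((h.1 x z).2 h'')))⟩

/-- Chickering: find a covered edge on which the two DAGs disagree. -/
theorem exists_covered [Fintype V] {D D' : Dag V} (h : SameVS D D')
    (hex : ∃ x y, D.edge x y ∧ D'.edge y x) :
    ∃ a b, D.edge a b ∧ D'.edge b a ∧ ∀ p, D.edge p b ↔ (D.edge p a ∨ p = a) := by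
  classical
  obtain ⟨r, -, hr⟩ := exists_inj_rank D
  have hex' : ∃ n y, r y = n ∧ ∃ x, D.edge x y ∧ D'.edge y x := by
    obtain ⟨x, y, hxy⟩ := hex
    exact ⟨_, y, rfl, x, hxy⟩
  obtain ⟨y, hy, hxy⟩ := Nat.find_spec hex'
  have hmin : ∀ z, r z < r y → ∀ w, D.edge w z → D'.edge w z := by
    intro z hz w hw
    by_contra hn
    have : D'.edge z w := ((h.1 w z).1 (Or.inl hw)).resolve_left hn
    exact Nat.find_min hex' (by rw [← hy]; exact hz) ⟨z, rfl, w, hw, this⟩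
  obtain ⟨x, hx, hxmax⟩ := Finset.exists_max_image
    (Finset.univ.filter (fun x => D.edge x y ∧ D'.edge y x)) r
    (by obtain ⟨x, hx⟩ := hxy; exact ⟨x, by simpa using hx⟩)
  simp only [Finset.mem_filter, Finset.mem_univ, true_and] at hx hxmax
  obtain ⟨hx1, hx2⟩ := hx
  refine ⟨x, y, hx1, hx2, fun p => ⟨fun hp => ?_, ?_⟩⟩
  · by_cases hpx : p = x
    · exact Or.inr hpx
    · left
      have hadj : D.Adj p x := by
        by_contra hn
        exact dag_asymm D' hx2 ((h.2 p y x hpx hn).1 ⟨hp, hx1⟩).2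
      rcases hadj with ha | ha
      · exact ha
      · exfalso
        have h1 : D'.edge p y := by
          by_contra hn
          have h2 : D'.edge y p := ((h.1 p y).1 (Or.inl hp)).resolve_left hn
          have := hxmax p ⟨hp, h2⟩
          have := hr _ _ ha
          omega
        have h2 : D'.edge x p := hmin p (hr _ _ hp) x ha
        exact dag_three D' h2 h1 hx2
  · rintro (hp | rfl)
    · by_contra hn
      have hpy : p ≠ y := by rintro rfl; exact dag_asymm D hp hx1
      have hadj : ¬ D.Adj p y := by
        rintro (h' | h')
        · exact hn h'
        · exact dag_three D hp hx1 h'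
      have h1 : D'.edge p x := hmin x (hr _ _ hx1) p hp
      exact dag_asymm D hx1 ((h.2 p x y hpy hadj).2 ⟨h1, hx2⟩).2
    · exact hx1

theorem dag_ext {D D' : Dag V} (h : ∀ x y, D.edge x y → D'.edge x y)
    (h' : ∀ x y, D'.edge x y → D.edge x y) : D = D' := by
  cases D; cases D'
  congr
  funext x y
  exact propext ⟨h x y, h' x y⟩

theorem mequiv_of_sameVS [Fintype V] (D' : Dag V) : ∀ (n : ℕ) (D : Dag V), SameVS D D' →
    Set.ncard {q : V × V | D.edge q.1 q.2 ∧ D'.edge q.2 q.1} = n → D.MEquiv D' := by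
  classical
  intro n
  induction n using Nat.strong_induction_on with
  | _ n ih =>
    intro D h hn
    by_cases hex : ∃ x y, D.edge x y ∧ D'.edge y x
    · obtain ⟨a, b, hab, hba, cov⟩ := exists_covered h hex
      obtain ⟨D1, hf⟩ := exists_flip D cov
      have hm := flip_mequiv hf
      have hs : SameVS D1 D' := sameVS_trans (sameVS_symm (sameVS_of_mequiv hm)) h
      have hlt : Set.ncard {q : V × V | D1.edge q.1 q.2 ∧ D'.edge q.2 q.1} < n := by
        rw [← hn]
        apply Set.ncard_lt_ncard _ (Set.toFinite _)
        refine ⟨?_, ?_⟩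
        · rintro ⟨u, v⟩ ⟨h1, h2⟩
          rcases (hf.edge' u v).1 h1 with h3 | ⟨rfl, rfl⟩
          · exact ⟨h3.1, h2⟩
          · exact (dag_asymm D' hba h2).elim
        · intro hsub
          have h1 := @hsub (a, b) ⟨hab, hba⟩
          rcases (hf.edge' a b).1 h1.1 with h3 | ⟨h3, h4⟩
          · exact h3.2 ⟨rfl, rfl⟩
          · exact dag_irrefl D (h3 ▸ hab)
      have := ih _ hlt D1 hs rfl
      exact fun x y S => (hm x y S).trans (this x y S)
    · push Not at hex
      have : D = D' := by
        apply dag_ext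
        · intro x y hxy
          exact ((h.1 x y).1 (Or.inl hxy)).resolve_right (hex x y hxy)
        · intro x y hxy
          exact ((h.1 x y).2 (Or.inl hxy)).resolve_right (fun h' => hex y x h' hxy)
      subst this
      exact fun x y S => Iff.rfl

/-! ### Meek rules -/

inductive Dir (D : Dag V) : V → V → Prop
  | r0 (x y z : V) : D.edge x y → D.edge z y → x ≠ z → ¬ D.Adj x z → Dir D x y
  | r1 (x y z : V) : Dir D x y → D.edge y z → ¬ D.Adj x z → Dir D y z
  | r2 (x y z : V) : Dir D x y → Dir D y z → D.Adj x z → Dir D x z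
  | r3 (x k l y : V) : D.Adj x k → D.Adj x l → Dir D k y → Dir D l y → k ≠ l → ¬ D.Adj k l →
      D.edge x y → ¬ (D.edge k x ∧ D.edge l x) → Dir D x y

/-- soundness -/
theorem dir_sound {D D' : Dag V} (h : SameVS D D') {x y : V} (hd : Dir D x y) :
    D.edge x y ∧ D'.edge x y := by
  induction hd with
  | r0 x y z h1 h2 h3 h4 => exact ⟨h1, ((h.2 x y z h3 h4).1 ⟨h1, h2⟩).1⟩
  | r1 x y z _ h2 h3 ih =>
    refine ⟨h2, ?_⟩
    by_contra hn
    have h4 : D'.edge z y := ((h.1 y z).1 (Or.inl h2)).resolve_left hn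
    have hne : x ≠ z := by rintro rfl; exact dag_asymm D ih.1 h2
    exact dag_asymm D h2 ((h.2 x y z hne h3).2 ⟨ih.2, h4⟩).2
  | r2 x y z _ _ h3 ih1 ih2 =>
    exact ⟨h3.resolve_right (fun h' => dag_three D ih1.1 ih2.1 h'),
      ((h.1 x z).1 h3).resolve_right (fun h' => dag_three D' ih1.2 ih2.2 h')⟩
  | r3 x k l y h1 h2 _ _ h5 h6 h7 h8 ih1 ih2 =>
    refine ⟨h7, ?_⟩
    by_contra hn
    have h9 : D'.edge y x := ((h.1 x y).1 (Or.inl h7)).resolve_left hn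
    have hk : D'.edge k x := ((h.1 x k).1 h1).resolve_left (fun h' => dag_three D' h' ih1.2 h9)
    have hl : D'.edge l x := ((h.1 x l).1 h2).resolve_left (fun h' => dag_three D' h' ih2.2 h9)
    exact h8 ((h.2 k x l h5 h6).2 ⟨hk, hl⟩)

theorem sameVS_refl (D : Dag V) : SameVS D D := ⟨fun _ _ => Iff.rfl, fun _ _ _ _ _ => Iff.rfl⟩

theorem dir_edge {D : Dag V} {x y : V} (hd : Dir D x y) : D.edge x y :=
  (dir_sound (sameVS_refl D) hd).1

/-- undirected edges -/
def Und (D : Dag V) (x y : V) : Prop := D.Adj x y ∧ ¬ Dir D x y ∧ ¬ Dir D y x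

theorem und_symm {D : Dag V} {x y : V} (h : Und D x y) : Und D y x := ⟨h.1.symm, h.2.2, h.2.1⟩

theorem dir_adj {D : Dag V} {a b c : V} (h : Dir D a b) (hu : Und D b c) : D.Adj a c := by
  by_contra hn
  have he := dir_edge h
  rcases hu.1 with h1 | h1
  · exact hu.2.1 (Dir.r1 a b c h h1 hn)
  · refine hu.2.2 (Dir.r0 c b a h1 he ?_ (fun h' => hn h'.symm))
    rintro rfl
    exact hu.2.2 h

theorem dir_und {D : Dag V} {a b : V} (h : Dir D a b) : ∀ c, Und D b c → Dir D a c := by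
  have aux : ∀ {a b c}, Dir D a b → Und D b c → ¬ Dir D a c → Und D a c := by
    intro a b c h hu hn
    have := dir_adj h hu
    exact ⟨this, hn, fun h' => hu.2.2 (Dir.r2 c a b h' h hu.1.symm)⟩
  induction h with
  | r0 a b z h1 h2 h3 h4 =>
    intro c hu
    by_contra hn
    have hab : Dir D a b := Dir.r0 a b z h1 h2 h3 h4
    have hzb : Dir D z b := Dir.r0 z b a h2 h1 h3.symm (fun h' => h4 h'.symm)
    have hac := aux hab hu hn
    have hzc := dir_adj hzb hu
    have hnv : ¬ (D.edge a c ∧ D.edge z c) := fun hh => hn (Dir.r0 a c z hh.1 hh.2 h3 h4)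
    rcases hu.1 with hbc | hcb
    · refine hnv ⟨hac.1.resolve_right (fun h' => dag_three D h1 hbc h'),
        hzc.resolve_right (fun h' => dag_three D h2 hbc h')⟩
    · exact hu.2.2 (Dir.r3 c a z b hac.1.symm hzc.symm hab hzb h3 h4 hcb hnv)
  | r1 x a b h1 h2 h3 ih =>
    intro c hu
    by_contra hn
    have hab : Dir D a b := Dir.r1 x a b h1 h2 h3
    have hac := aux hab hu hn
    exact h3 (dir_adj (ih c hac) (und_symm hu))
  | r2 a k b h1 h2 h3 ih1 ih2 =>
    intro c hu
    exact Dir.r2 a k c h1 (ih2 c hu) (dir_adj (Dir.r2 a k b h1 h2 h3) hu)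
  | r3 a k l b h1 h2 h3 h4 h5 h6 h7 h8 ih1 ih2 =>
    intro c hu
    by_contra hn
    have hab : Dir D a b := Dir.r3 a k l b h1 h2 h3 h4 h5 h6 h7 h8
    have hac := aux hab hu hn
    have hk := ih1 c hu
    have hl := ih2 c hu
    rcases hac.1 with h | h
    · exact hn (Dir.r3 a k l c h1 h2 hk hl h5 h6 h h8)
    · exact h8 ⟨h1.resolve_left (fun h' => dag_three D h' (dir_edge hk) h),
        h2.resolve_left (fun h' => dag_three D h' (dir_edge hl) h)⟩

/-- Re-rooting a moral orientation. -/
theorem reroot [Fintype V] (U : V → V → Prop) (hsymm : ∀ x y, U x y → U y x)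
    (r : V → ℕ) (hinj : Function.Injective r) (hirr : ∀ x, ¬ U x x)
    (hm : ∀ x y z, U x y → U z y → r x < r y → r z < r y → x ≠ z → U x z) :
    ∀ (n : ℕ) (Q : Set V), (∀ q ∈ Q, r q < n) → (∀ p ∈ Q, ∀ q ∈ Q, p ≠ q → U p q) →
      ∃ s : V → ℕ, (∀ x y, r x < n → r y < n → U x y → s x ≠ s y) ∧
        (∀ x y z, r x < n → r y < n → r z < n → U x y → U z y → s x < s y → s z < s y →
          x ≠ z → U x z) ∧
        ∀ q ∈ Q, ∀ w, r w < n → w ∉ Q → s q < s w := by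
  classical
  intro n
  induction n with
  | zero =>
    intro Q _ _
    exact ⟨fun _ => 0, by intros; omega, by intros; omega, by intros; omega⟩
  | succ n ih =>
    intro Q hQ hcl
    by_cases hv : ∃ v ∈ Q, r v = n
    · obtain ⟨v, hvQ, hvn⟩ := hv
      have hlt : ∀ x, r x < n + 1 → x ≠ v → r x < n := by
        intro x hx hxv
        have : r x ≠ r v := fun h => hxv (hinj h)
        omega
      obtain ⟨s, s1, s2, s3⟩ := ih {x | U x v ∧ r x < n} (fun q hq => hq.2)
        (fun p hp q hq hpq => hm p v q hp.1 hq.1 (by rw [hvn]; exact hp.2)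
          (by rw [hvn]; exact hq.2) hpq)
      have hQN : ∀ q ∈ Q, q ≠ v → U q v ∧ r q < n := fun q hq hqv =>
        ⟨hcl q hq v hvQ hqv, hlt q (hQ q hq) hqv⟩
      obtain ⟨M, hM⟩ : ∃ M, ∀ x, s x ≤ M :=
        ⟨Finset.univ.sup s, fun x => Finset.le_sup (Finset.mem_univ x)⟩
      have hclN : ∀ p q, U p v → r p < n → U q v → r q < n → p ≠ q → U p q :=
        fun p q h1 h2 h3 h4 h5 => hm p v q h1 h3 (by omega) (by omega) h5
      let t : V → ℕ := fun x => if x = v then M + 1 else if x ∈ Q then s x else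
        if U x v then M + 2 + s x else 2 * M + 3 + s x
      have tv : t v = M + 1 := by simp [t]
      have tQ : ∀ x, x ≠ v → x ∈ Q → t x = s x := by intro x h1 h2; simp [t, h1, h2]
      have tN : ∀ x, x ≠ v → x ∉ Q → U x v → t x = M + 2 + s x := by
        intro x h1 h2 h3; simp [t, h1, h2, h3]
      have tO : ∀ x, x ≠ v → x ∉ Q → ¬ U x v → t x = 2 * M + 3 + s x := by
        intro x h1 h2 h3; simp [t, h1, h2, h3]
      -- summary facts
      have tbig : ∀ x, ¬ U x v → x ≠ v → t x = 2 * M + 3 + s x := by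
        intro x h1 h2
        exact tO x h2 (fun h => h1 (hQN x h h2).1) h1
      have tsmall : ∀ x, (U x v ∨ x = v) → t x ≤ 2 * M + 2 := by
        intro x hx
        have := hM x
        by_cases h1 : x = v
        · subst h1; omega
        · have hU := hx.resolve_right h1
          by_cases h2 : x ∈ Q
          · rw [tQ x h1 h2]; omega
          · rw [tN x h1 h2 hU]; omega
      refine ⟨t, ?_, ?_, ?_⟩
      · intro x y hx hy hxy
        have hMx := hM x
        have hMy := hM y
        have hne : x ≠ y := by rintro rfl; exact hirr _ hxy
        have hs := fun h1 h2 => s1 x y (hlt x hx h1) (hlt y hy h2) hxy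
        grind
      · intro x y z hx hy hz hxy hzy htx htz hxz
        by_cases hyv : U y v ∨ y = v
        · have hy2 := tsmall y hyv
          have hx2 : U x v ∨ x = v := by
            by_contra hn
            push Not at hn
            have := tbig x hn.1 hn.2
            omega
          have hz2 : U z v ∨ z = v := by
            by_contra hn
            push Not at hn
            have := tbig z hn.1 hn.2
            omega
          by_cases hxv : x = v
          · subst hxv
            exact hsymm _ _ (hz2.resolve_right (fun h => hxz h.symm))
          · by_cases hzv : z = v
            · subst hzv; exact hx2.resolve_right hxv
            · exact hclN x z (hx2.resolve_right hxv) (hlt x hx hxv)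
                (hz2.resolve_right hzv) (hlt z hz hzv) hxz
        · push Not at hyv
          obtain ⟨hy1, hy2⟩ := hyv
          have hxv : x ≠ v := by rintro rfl; exact hy1 (hsymm _ _ hxy)
          have hzv : z ≠ v := by rintro rfl; exact hy1 (hsymm _ _ hzy)
          have key : ∀ w, w ≠ v → r w < n + 1 → t w < t y → s w < s y := by
            intro w hw hwn hwt
            by_cases hU : U w v
            · exact s3 w ⟨hU, hlt w hwn hw⟩ y (hlt y hy hy2) (fun h => hy1 h.1)
            · rw [tbig w hU hw, tbig y hy1 hy2] at hwt
              omega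
          exact s2 x y z (hlt x hx hxv) (hlt y hy hy2) (hlt z hz hzv) hxy hzy
            (key x hxv hx htx) (key z hzv hz htz) hxz
      · intro q hq w hw hwQ
        have hMq := hM q
        have hwv : w ≠ v := by rintro rfl; exact hwQ hvQ
        have h1 : t q ≤ M + 1 := by
          by_cases h : q = v
          · subst h; omega
          · rw [tQ q h hq]; omega
        by_cases hU : U w v
        · rw [tN w hwv hwQ hU]; omega
        · rw [tO w hwv hwQ hU]; omega
    · push Not at hv
      obtain ⟨s, s1, s2, s3⟩ := ih Q (fun q hq => by
        have := hQ q hq; have := hv q hq; omega) hcl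
      obtain ⟨M, hM⟩ : ∃ M, ∀ x, s x ≤ M :=
        ⟨Finset.univ.sup s, fun x => Finset.le_sup (Finset.mem_univ x)⟩
      let t : V → ℕ := fun x => if r x < n then s x else M + 1
      have t1 : ∀ x, r x < n → t x = s x := fun x h => by simp [t, h]
      have t2 : ∀ x, ¬ r x < n → t x = M + 1 := fun x h => by simp [t, h]
      have tle : ∀ x, t x ≤ M + 1 := by
        intro x
        have := hM x
        by_cases h : r x < n
        · rw [t1 x h]; omega
        · rw [t2 x h]
      have tlt : ∀ x y, t x < t y → r x < n := by
        intro x y h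
        by_contra hn
        rw [t2 x hn] at h
        have := tle y
        omega
      refine ⟨t, ?_, ?_, ?_⟩
      · intro x y hx hy hxy
        have hMx := hM x
        have hMy := hM y
        have hne : r x ≠ r y := fun h => hirr x (by have := hinj h; rw [← this] at hxy; exact hxy)
        by_cases h1 : r x < n
        · by_cases h2 : r y < n
          · rw [t1 x h1, t1 y h2]; exact s1 x y h1 h2 hxy
          · rw [t1 x h1, t2 y h2]; omega
        · have h2 : r y < n := by omega
          rw [t2 x h1, t1 y h2]; omega
      · intro x y z hx hy hz hxy hzy htx htz hxz
        have hxn := tlt _ _ htx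
        have hzn := tlt _ _ htz
        by_cases h : r y < n
        · rw [t1 _ hxn, t1 _ h] at htx
          rw [t1 _ hzn, t1 _ h] at htz
          exact s2 x y z hxn h hzn hxy hzy htx htz hxz
        · exact hm x y z hxy hzy (by omega) (by omega) hxz
      · intro q hq w hw hwQ
        have hqn : r q < n := by have := hQ q hq; have := hv q hq; omega
        have hMq := hM q
        rw [t1 q hqn]
        by_cases h : r w < n
        · rw [t1 w h]; exact s3 q hq w h hwQ
        · rw [t2 w h]; omega

theorem dir_complete [Fintype V] (D : Dag V) {a b : V} (hab : D.Adj a b) (hn : ¬ Dir D b a) :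
    ∃ D' : Dag V, SameVS D D' ∧ D'.edge a b := by
  classical
  by_cases hd : Dir D a b
  · exact ⟨D, sameVS_refl D, dir_edge hd⟩
  have hu : Und D a b := ⟨hab, hd, hn⟩
  obtain ⟨r, hinj, hr⟩ := exists_inj_rank D
  have hedge : ∀ x y, Und D x y → r x < r y → D.edge x y := by
    intro x y h hlt
    refine h.1.resolve_right (fun h' => ?_)
    have := hr _ _ h'
    omega
  obtain ⟨M, hM⟩ : ∃ M, ∀ x, r x ≤ M :=
    ⟨Finset.univ.sup r, fun x => Finset.le_sup (Finset.mem_univ x)⟩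
  have hM' : ∀ x, r x < M + 1 := fun x => Nat.lt_succ_of_le (hM x)
  obtain ⟨s, s1, s2, s3⟩ := reroot (Und D) (fun x y h => und_symm h) r hinj
    (fun x h => adj_ne h.1 rfl)
    (by
      intro x y z hxy hzy h1 h2 hxz
      have e1 := hedge _ _ hxy h1
      have e2 := hedge _ _ hzy h2
      refine ⟨?_, ?_, ?_⟩
      · by_contra hn
        exact hxy.2.1 (Dir.r0 x y z e1 e2 hxz hn)
      · intro h
        exact hxy.2.1 (dir_und h y hzy)
      · intro h
        exact hzy.2.1 (dir_und h y hxy))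
    (M + 1) {a} (fun q _ => hM' q)
    (fun p hp q hq hpq => (hpq (by rw [hp, hq])).elim)
  have hsab : s a < s b := s3 a rfl b (hM' b) (adj_ne hab).symm
  obtain ⟨t, t1, t2⟩ := exists_rank_of_trans (Dir D) (by
    intro v h
    exact transGen_irrefl D v (Relation.TransGen.mono (fun x y h => dir_edge h) v v h))
  have hund_anc : ∀ x y c, Und D x y → Relation.TransGen (Dir D) c x →
      Relation.TransGen (Dir D) c y := by
    intro x y c hxy h
    obtain ⟨p, hp, hpx⟩ := Relation.TransGen.tail'_iff.1 h
    exact Relation.TransGen.tail'_iff.2 ⟨p, hp, dir_und hpx y hxy⟩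
  have ht : ∀ x y, Und D x y → t x = t y := fun x y h =>
    t2 x y (fun c => ⟨hund_anc x y c h, hund_anc y x c (und_symm h)⟩)
  obtain ⟨K, hK⟩ : ∃ K, ∀ x, s x ≤ K :=
    ⟨Finset.univ.sup s, fun x => Finset.le_sup (Finset.mem_univ x)⟩
  let D' : Dag V := ⟨fun x y => Dir D x y ∨ (Und D x y ∧ s x < s y),
    acyclic_of_rank (fun v => (K + 1) * t v + s v) (by
      rintro x y (h | ⟨h, h'⟩)
      · have h1 : (K + 1) * (t x + 1) ≤ (K + 1) * t y := Nat.mul_le_mul_left _ (t1 x y h)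
        have h2 := hK x
        rw [Nat.mul_add] at h1
        omega
      · simp only [ht x y h]
        omega)⟩
  have hD' : ∀ x y, D'.edge x y ↔ (Dir D x y ∨ (Und D x y ∧ s x < s y)) := fun _ _ => Iff.rfl
  have hskel : ∀ x y, D.Adj x y ↔ D'.Adj x y := by
    intro x y
    unfold Dag.Adj
    rw [hD', hD']
    constructor
    · intro h
      by_cases h1 : Dir D x y
      · exact Or.inl (Or.inl h1)
      · by_cases h2 : Dir D y x
        · exact Or.inr (Or.inl h2)
        · have hU : Und D x y := ⟨h, h1, h2⟩
          rcases lt_or_gt_of_ne (s1 x y (hM' x) (hM' y) hU) with h3 | h3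
          · exact Or.inl (Or.inr ⟨hU, h3⟩)
          · exact Or.inr (Or.inr ⟨und_symm hU, h3⟩)
    · rintro ((h | h) | (h | h))
      · exact Or.inl (dir_edge h)
      · exact h.1.1
      · exact Or.inr (dir_edge h)
      · exact h.1.1.symm
  refine ⟨D', ⟨hskel, ?_⟩, Or.inr ⟨hu, hsab⟩⟩
  intro x y z hne hnadj
  rw [hD', hD']
  constructor
  · rintro ⟨h1, h2⟩
    exact ⟨Or.inl (Dir.r0 x y z h1 h2 hne hnadj),
      Or.inl (Dir.r0 z y x h2 h1 hne.symm (fun h => hnadj h.symm))⟩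
  · rintro ⟨h1 | h1, h2 | h2⟩
    · exact ⟨dir_edge h1, dir_edge h2⟩
    · exact (hnadj (dir_adj h1 (und_symm h2.1))).elim
    · exact (hnadj (dir_adj h2 (und_symm h1.1)).symm).elim
    · exact (hnadj (s2 x y z (hM' x) (hM' y) (hM' z) h1.1 h2.1 h1.2 h2.2 hne).1).elim

theorem triangle {D : Dag V} {a b c : V} (h1 : D.Adj a b) (h2 : ¬ Dir D b a) (h3 : D.Adj b c)
    (h4 : ¬ Dir D c b) : ¬ Dir D c a := by
  intro h
  by_cases hd : Dir D a b
  · exact h4 (Dir.r2 c a b h hd h3.symm)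
  · exact h4 (dir_und h b ⟨h1, hd, h2⟩)

/-- possibly directed walks -/
def PW (D : Dag V) (x y : V) (n : ℕ) : Prop :=
  ∃ f : ℕ → V, f 0 = x ∧ f n = y ∧
    ∀ i, i < n → D.Adj (f i) (f (i + 1)) ∧ ¬ Dir D (f (i + 1)) (f i)

theorem exists_anc_of_pw [Fintype V] (D : Dag V) {x y : V} (hxy : x ≠ y) (h : ∃ n, PW D x y n) :
    ∃ D' : Dag V, SameVS D D' ∧ D'.Anc x y := by
  classical
  obtain ⟨f, h0, hn, hf⟩ := Nat.find_spec h
  have hmin : ∀ m, m < Nat.find h → ¬ PW D x y m := fun m hm => Nat.find_min h hm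
  generalize Nat.find h = n at hn hf hmin
  have hpos : 0 < n := by
    rcases Nat.eq_zero_or_pos n with h | h
    · subst h; exact (hxy (h0.symm.trans hn)).elim
    · exact h
  have hne : ∀ i, i + 2 ≤ n → f i ≠ f (i + 2) := by
    intro i hi he
    refine hmin (n - 2) (by omega) ⟨fun k => if k ≤ i then f k else f (k + 2), by simpa using h0,
      ?_, ?_⟩
    · by_cases h1 : n - 2 ≤ i
      · have e1 : n - 2 = i := by omega
        have e2 : i + 2 = n := by omega
        simp only [e1, le_refl, if_true]
        rw [he, e2, hn]
      · have e2 : n - 2 + 2 = n := by omega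
        simp only [h1, if_false]
        rw [e2, hn]
    · intro k hk
      by_cases h1 : k + 1 ≤ i
      · have h2 : k ≤ i := by omega
        simp only [h1, h2, if_true]
        exact hf k (by omega)
      · by_cases h2 : k ≤ i
        · have h3 : k = i := by omega
          subst h3
          simp only [h1, le_refl, if_true, if_false]
          rw [he]
          exact hf (k + 2) (by omega)
        · simp only [h1, h2, if_false]
          exact hf (k + 2) (by omega)
  have hnadj : ∀ i, i + 2 ≤ n → ¬ D.Adj (f i) (f (i + 2)) := by
    intro i hi ha
    have hi1 := hf i (by omega)
    have hi2 := hf (i + 1) (by omega)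
    have ht := triangle hi1.1 hi1.2 hi2.1 hi2.2
    refine hmin (n - 1) (by omega) ⟨fun k => if k ≤ i then f k else f (k + 1), by simpa using h0,
      ?_, ?_⟩
    · have h1 : ¬ n - 1 ≤ i := by omega
      have e2 : n - 1 + 1 = n := by omega
      simp only [h1, if_false]
      rw [e2, hn]
    · intro k hk
      by_cases h1 : k + 1 ≤ i
      · have h2 : k ≤ i := by omega
        simp only [h1, h2, if_true]
        exact hf k (by omega)
      · by_cases h2 : k ≤ i
        · have h3 : k = i := by omega
          subst h3
          simp only [h1, le_refl, if_true, if_false]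
          exact ⟨ha, ht⟩
        · simp only [h1, h2, if_false]
          exact hf (k + 1) (by omega)
  obtain ⟨D', hs, he⟩ := dir_complete D (hf 0 hpos).1 (hf 0 hpos).2
  have hall : ∀ i, i < n → D'.edge (f i) (f (i + 1)) := by
    intro i
    induction i with
    | zero => intro _; exact he
    | succ i ih =>
      intro hi
      have h1 := ih (by omega)
      have h2 := hf (i + 1) hi
      by_contra hno
      have h3 : D'.edge (f (i + 2)) (f (i + 1)) := ((hs.1 _ _).1 h2.1).resolve_left hno
      obtain ⟨h4, h5⟩ := (hs.2 _ _ _ (hne i (by omega)) (hnadj i (by omega))).2 ⟨h1, h3⟩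
      exact h2.2 (Dir.r0 _ _ _ h5 h4 (hne i (by omega)).symm
        (fun h => hnadj i (by omega) h.symm))
  refine ⟨D', hs, ?_⟩
  have hanc : ∀ i, i ≤ n → D'.Anc x (f i) := by
    intro i
    induction i with
    | zero => intro _; rw [h0]; exact Relation.ReflTransGen.refl
    | succ i ih => intro hi; exact (ih (by omega)).tail (hall i (by omega))
  rw [← hn]
  exact hanc n le_rfl

theorem exists_fun_of_anc {E : V → V → Prop} {x y : V} (h : Relation.ReflTransGen E x y) :
    ∃ n, ∃ f : ℕ → V, f 0 = x ∧ f n = y ∧ ∀ i, i < n → E (f i) (f (i + 1)) := by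
  induction h using Relation.ReflTransGen.head_induction_on with
  | refl => exact ⟨0, fun _ => y, rfl, rfl, by intros; omega⟩
  | @head a c hac _ ih =>
    obtain ⟨n, f, h0, hn, hf⟩ := ih
    refine ⟨n + 1, fun k => Nat.casesOn k a f, rfl, hn, ?_⟩
    intro i hi
    cases i with
    | zero => simpa [h0] using hac
    | succ i => exact hf i (by omega)

theorem possAn_of_anc {D D' : Dag V} (hm : D.MEquiv D') {x y : V} (h : D'.Anc x y) :
    D.PossAn x y := by
  obtain ⟨n, f, h0, hn, hf⟩ := exists_fun_of_anc h
  have hanc : ∀ m i, i + m ≤ n → D'.Anc (f i) (f (i + m)) := by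
    intro m
    induction m with
    | zero => intro i _; exact Relation.ReflTransGen.refl
    | succ m ih => intro i hi; exact (ih i (by omega)).tail (hf (i + m) (by omega))
  have hne : ∀ i j, i < j → j ≤ n → f i ≠ f j := by
    intro i j hij hj he
    have h1 := hanc (j - (i + 1)) (i + 1) (by omega)
    have e : i + 1 + (j - (i + 1)) = j := by omega
    rw [e, ← he] at h1
    exact D'.acyclic _ _ (hf i (by omega)) h1
  refine ⟨{ n := n
            f := fun k => f k
            inj := ?_
            first := h0
            last := hn
            adj := fun i => adj_of_mequiv (mequiv_symm hm) (Or.inl (hf i i.2)) }, ?_⟩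
  · intro a b hab
    simp only at hab
    rcases lt_trichotomy (a : ℕ) b with h | h | h
    · exact (hne _ _ h (by omega) hab).elim
    · exact Fin.ext h
    · exact (hne _ _ h (by omega) hab.symm).elim
  · intro i hc
    exact dag_asymm D' (hf i i.2) (hc D' hm)

theorem main_iff [Fintype V] (D : Dag V) {x y : V} (hxy : x ≠ y) :
    (∃ D' : Dag V, D.MEquiv D' ∧ D'.Anc x y) ↔ D.PossAn x y := by
  constructor
  · rintro ⟨D', hm, h⟩
    exact possAn_of_anc hm h
  · rintro ⟨p, hp⟩
    have hpw : PW D x y p.n := by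
      let f : ℕ → V := fun k => if hk : k < p.n + 1 then p.f ⟨k, hk⟩ else y
      have hf : ∀ k (hk : k < p.n + 1), f k = p.f ⟨k, hk⟩ := fun k hk => dif_pos hk
      refine ⟨f, ?_, ?_, ?_⟩
      · rw [hf 0 (by omega)]; exact p.first
      · rw [hf p.n (by omega)]; exact p.last
      · intro i hi
        rw [hf i (by omega), hf (i + 1) (by omega)]
        refine ⟨p.adj ⟨i, hi⟩, fun hd => hp ⟨i, hi⟩ ?_⟩
        intro D' hm
        exact (dir_sound (sameVS_of_mequiv hm) hd).2
    obtain ⟨D', hs, ha⟩ := exists_anc_of_pw D hxy ⟨_, hpw⟩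
    exact ⟨D', mequiv_of_sameVS D' _ D hs rfl, ha⟩

end MecAux

/-- For distinct `X`, `Y`, `X` is an ancestor of `Y` in at least one DAG
of the MEC represented by the CPDAG `G` of the MEC of a DAG iff there is a possibly
directed path from `X` to `Y` in `G`. -/
theorem ancestor_in_some_dag_iff_possAn
    {V : Type*} [Fintype V] (D : Dag V) (X Y : V) (hXY : X ≠ Y) :
    (∃ D' : Dag V, D.MEquiv D' ∧ D'.Anc X Y) ↔ D.PossAn X Y := by
  exact MecAux.main_iff D hXY
end

section
/- Let G be the CPDAG of the Markov equivalence class of a DAG, and let X and Y be distinct nodes. If Y is an explicit ancestor of X in G (there is a fully directed path from Y to X in G), then X is a definite non-ancestor of Y in G (there is no possibly directed path from X to Y in G). -/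
variable {V : Type*}

section CPDAGProof

namespace Dag

/-! ### Basic facts -/

theorem adj_comm' {D : Dag V} {a b : V} (h : D.Adj a b) : D.Adj b a := Or.symm h

theorem edge_asymm {D : Dag V} {a b : V} (h : D.edge a b) : ¬ D.edge b a := fun h' =>
  D.acyclic a b h (Relation.ReflTransGen.single h')

theorem edge_irrefl {D : Dag V} {a : V} : ¬ D.edge a a := fun h =>
  D.acyclic a a h Relation.ReflTransGen.refl

theorem edge_ne {D : Dag V} {a b : V} (h : D.edge a b) : a ≠ b := by
  rintro rfl; exact edge_irrefl h

theorem adj_ne {D : Dag V} {a b : V} (h : D.Adj a b) : a ≠ b := by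
  rintro rfl
  rcases h with h | h <;> exact edge_irrefl h

theorem edge_tri {D : Dag V} {a b c : V} (h : D.edge a b) (h' : D.edge b c) : ¬ D.edge c a :=
  fun h'' => D.acyclic a b h ((Relation.ReflTransGen.single h').tail h'')

theorem edge_of_tri {D : Dag V} {a b c : V} (h : D.edge a b) (h' : D.edge b c)
    (h'' : D.Adj a c) : D.edge a c := h''.resolve_right (edge_tri h h')

theorem edge_wf [Finite V] (D : Dag V) : WellFounded D.edge := by
  have htr : IsTrans V (Relation.TransGen D.edge) := ⟨fun _ _ _ h h' => h.trans h'⟩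
  have hirr : Std.Irrefl (Relation.TransGen D.edge) := ⟨fun a h => by
    obtain ⟨b, hab, hba⟩ := Relation.TransGen.head'_iff.1 h
    exact D.acyclic a b hab hba⟩
  exact Subrelation.wf (fun h => Relation.TransGen.single h)
    (Finite.wellFounded_of_trans_of_irrefl (Relation.TransGen D.edge))

theorem rtg_mono {r s : V → V → Prop} (h : ∀ a b, r a b → s a b) {a b : V}
    (hab : Relation.ReflTransGen r a b) : Relation.ReflTransGen s a b := by
  induction hab with
  | refl => exact Relation.ReflTransGen.refl
  | tail _ hbc ih => exact ih.tail (h _ _ hbc)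

theorem edge_wf_swap [Finite V] (D : Dag V) : WellFounded (fun a b => D.edge b a) := by
  have htr : IsTrans V (fun a b => Relation.TransGen D.edge b a) :=
    ⟨fun _ _ _ h h' => Relation.TransGen.trans h' h⟩
  have hirr : Std.Irrefl (fun a b => Relation.TransGen D.edge b a) := ⟨fun a h => by
    obtain ⟨b, hab, hba⟩ := Relation.TransGen.head'_iff.1 h
    exact D.acyclic a b hab hba⟩
  have hw : WellFounded (fun a b => Relation.TransGen D.edge b a) :=
    Finite.wellFounded_of_trans_of_irrefl _
  have hsub : Subrelation (fun a b => D.edge b a) (fun a b => Relation.TransGen D.edge b a) :=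
    fun {a b} h => Relation.TransGen.single h
  exact Subrelation.wf hsub hw

/-! ### Reachability description of d-connection -/

/-- `v` has a descendant in `S`. -/
def HasDes (D : Dag V) (S : Set V) (v : V) : Prop := ∃ d, D.Anc v d ∧ d ∈ S

theorem HasDes.step {D : Dag V} {S : Set V} {v w : V} (h : D.edge v w) (hw : D.HasDes S w) :
    D.HasDes S v := by
  obtain ⟨d, hd, hS⟩ := hw
  exact ⟨d, Relation.ReflTransGen.head h hd, hS⟩

theorem HasDes.cases {D : Dag V} {S : Set V} {v : V} (h : D.HasDes S v) :
    v ∈ S ∨ ∃ w, D.edge v w ∧ D.HasDes S w := by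
  obtain ⟨d, hd, hS⟩ := h
  rcases Relation.ReflTransGen.cases_head hd with rfl | ⟨w, hw, hwd⟩
  · exact Or.inl hS
  · exact Or.inr ⟨w, hw, d, hwd, hS⟩

theorem HasDes.self {D : Dag V} {S : Set V} {v : V} (h : v ∈ S) : D.HasDes S v :=
  ⟨v, Relation.ReflTransGen.refl, h⟩

/-- How a walk arrived at a node. -/
inductive Mark
  | st
  | hd
  | tl

inductive Reach (D : Dag V) (S : Set V) (x : V) : V → Mark → Prop
  | start : Reach D S x x Mark.st
  | fwd {v w : V} {d : Mark} : Reach D S x v d → D.edge v w → (d = Mark.st ∨ v ∉ S) →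
      Reach D S x w Mark.hd
  | bwd {v w : V} {d : Mark} : Reach D S x v d → D.edge w v →
      (d = Mark.st ∨ (d = Mark.tl ∧ v ∉ S) ∨ (d = Mark.hd ∧ D.HasDes S v)) →
      Reach D S x w Mark.tl

theorem reach_of_not_dSep {D : Dag V} {S : Set V} {x y : V} (h : ¬ D.dSep x y S) :
    ∃ d, D.Reach S x y d := by
  unfold dSep at h
  push Not at h
  obtain ⟨p, hp⟩ := h
  have key : ∀ i : ℕ, ∀ hi : i ≤ p.n, ∃ d, D.Reach S x (p.f ⟨i, by omega⟩) d ∧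
      ((i = 0 ∧ d = Mark.st) ∨
       (0 < i ∧ d = Mark.hd ∧ D.edge (p.f ⟨i - 1, by omega⟩) (p.f ⟨i, by omega⟩)) ∨
       (0 < i ∧ d = Mark.tl ∧ D.edge (p.f ⟨i, by omega⟩) (p.f ⟨i - 1, by omega⟩))) := by
    intro i
    induction i with
    | zero =>
      intro hi
      refine ⟨Mark.st, ?_, Or.inl ⟨rfl, rfl⟩⟩
      rw [p.first]; exact Reach.start
    | succ i ih =>
      intro hi
      obtain ⟨d, hr, hd⟩ := ih (by omega)
      have hadj : D.Adj (p.f ⟨i, by omega⟩) (p.f ⟨i + 1, by omega⟩) := p.adj ⟨i, by omega⟩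
      have hopen : 0 < i → ((p.ColliderAt D.edge i ∨ p.f ⟨i, by omega⟩ ∉ S) ∧
          (p.ColliderAt D.edge i → D.HasDes S (p.f ⟨i, by omega⟩))) := by
        intro h0
        constructor
        · by_contra hcon
          push Not at hcon
          exact hp ⟨i, h0, by omega, Or.inl hcon⟩
        · intro hc
          by_contra hcon
          apply hp
          refine ⟨i, h0, by omega, Or.inr ⟨hc, ?_⟩⟩
          intro e he heS
          exact hcon ⟨e, he, heS⟩
      rcases hadj with hf | hb
      · refine ⟨Mark.hd, Reach.fwd hr hf ?_, Or.inr (Or.inl ⟨by omega, rfl, hf⟩)⟩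
        rcases hd with ⟨_, h2⟩ | ⟨h0, _⟩ | ⟨h0, _⟩
        · exact Or.inl h2
        · refine Or.inr ((hopen h0).1.resolve_left ?_)
          rintro ⟨_, _, _, hc⟩
          exact edge_asymm hf hc
        · refine Or.inr ((hopen h0).1.resolve_left ?_)
          rintro ⟨_, _, _, hc⟩
          exact edge_asymm hf hc
      · refine ⟨Mark.tl, Reach.bwd hr hb ?_, Or.inr (Or.inr ⟨by omega, rfl, hb⟩)⟩
        rcases hd with ⟨_, h2⟩ | ⟨h0, h1, h2⟩ | ⟨h0, h1, h2⟩
        · exact Or.inl h2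
        · exact Or.inr (Or.inr ⟨h1, (hopen h0).2 ⟨h0, by omega, h2, hb⟩⟩)
        · refine Or.inr (Or.inl ⟨h1, (hopen h0).1.resolve_left ?_⟩)
          rintro ⟨_, _, hc, _⟩
          exact edge_asymm h2 hc
  obtain ⟨d, hr, -⟩ := key p.n le_rfl
  rw [p.last] at hr
  exact ⟨d, hr⟩

/-- Openness of the middle node of a triple. -/
def OpenAt (D : Dag V) (S : Set V) (a v b : V) : Prop :=
  (D.edge a v ∧ D.edge b v ∧ D.HasDes S v) ∨ (¬ (D.edge a v ∧ D.edge b v) ∧ v ∉ S)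

/-- Open walks. -/
structure OpenWalk (D : Dag V) (S : Set V) (x y : V) (n : ℕ) (f : ℕ → V) : Prop where
  first : f 0 = x
  last : f n = y
  adj : ∀ i < n, D.Adj (f i) (f (i + 1))
  opn : ∀ i, i + 1 < n → D.OpenAt S (f i) (f (i + 1)) (f (i + 2))

theorem walk_of_reach {D : Dag V} {S : Set V} {x y : V} {d : Mark} (h : D.Reach S x y d) :
    ∃ n f, D.OpenWalk S x y n f ∧ ((n = 0 ∧ d = Mark.st) ∨
      (∃ m, n = m + 1 ∧ ((d = Mark.hd ∧ D.edge (f m) y) ∨ (d = Mark.tl ∧ D.edge y (f m))))) := by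
  have ext : ∀ {v w : V} {n : ℕ} {f : ℕ → V}, D.OpenWalk S x v n f → D.Adj v w →
      (∀ m, n = m + 1 → D.OpenAt S (f m) v w) →
      D.OpenWalk S x w (n + 1) (fun k => if k ≤ n then f k else w) := by
    intro v w n f hW hadj hop
    refine ⟨by simp [hW.first], by simp, ?_, ?_⟩
    · intro i hi
      by_cases h : i = n
      · subst h; simpa [hW.last] using hadj
      · have h1 : i ≤ n := by omega
        have h2 : i + 1 ≤ n := by omega
        simpa [h1, h2] using hW.adj i (by omega)
    · intro i hi
      by_cases h : i + 1 = n
      · have h3 := hop i h.symm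
        subst h
        have := hW.last
        simpa [this] using h3
      · have h1 : i ≤ n := by omega
        have h2 : i + 1 ≤ n := by omega
        have h3 : i + 2 ≤ n := by omega
        simpa [h1, h2, h3] using hW.opn i (by omega)
  induction h with
  | start => exact ⟨0, fun _ => x, ⟨rfl, rfl, by simp, by simp⟩, Or.inl ⟨rfl, rfl⟩⟩
  | @fwd v w d hr he hd ih =>
    obtain ⟨n, f, hW, hm⟩ := ih
    refine ⟨n + 1, _, ext hW (Or.inl he) ?_, Or.inr ⟨n, rfl, Or.inl ⟨rfl, by simpa [hW.last] using he⟩⟩⟩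
    rintro m rfl
    rcases hm with ⟨h0, _⟩ | ⟨m', h0, hm⟩
    · omega
    · refine Or.inr ⟨fun h => edge_asymm he h.2, hd.resolve_left ?_⟩
      rintro rfl
      rcases hm with ⟨h, _⟩ | ⟨h, _⟩ <;> cases h
  | @bwd v w d hr he hd ih =>
    obtain ⟨n, f, hW, hm⟩ := ih
    refine ⟨n + 1, _, ext hW (Or.inr he) ?_, Or.inr ⟨n, rfl, Or.inr ⟨rfl, by simpa [hW.last] using he⟩⟩⟩
    rintro m rfl
    rcases hm with ⟨h0, _⟩ | ⟨m', h0, hm⟩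
    · omega
    · obtain rfl : m = m' := by omega
      rcases hm with ⟨rfl, h⟩ | ⟨rfl, h⟩
      · rcases hd with h' | ⟨h', _⟩ | ⟨_, h'⟩
        · cases h'
        · cases h'
        · exact Or.inl ⟨h, he, h'⟩
      · rcases hd with h' | ⟨_, h'⟩ | ⟨h', _⟩
        · cases h'
        · exact Or.inr ⟨fun h'' => edge_asymm h h''.1, h'⟩
        · cases h'

theorem walk_des {D : Dag V} {S : Set V} {x y : V} {n : ℕ} {f : ℕ → V}
    (hW : D.OpenWalk S x y n f) (k : ℕ) : ∀ i, i + k + 1 ≤ n → D.edge (f i) (f (i + 1)) →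
      D.edge (f (i + k + 1)) (f (i + k)) → D.HasDes S (f i) := by
  induction k with
  | zero => intro i hi h1 h2; exact absurd h2 (edge_asymm h1)
  | succ k ih =>
    intro i hi h1 h2
    refine HasDes.step h1 ?_
    rcases hW.adj (i + 1) (by omega) with h | h
    · apply ih (i + 1) (by omega) h
      have e1 : i + 1 + k + 1 = i + (k + 1) + 1 := by omega
      have e2 : i + 1 + k = i + (k + 1) := by omega
      rw [e1, e2]; exact h2
    · rcases hW.opn i (by omega) with h' | h'
      · exact h'.2.2
      · exact absurd ⟨h1, h⟩ h'.1

theorem splice {D : Dag V} {S : Set V} {x y : V} {n : ℕ} {f : ℕ → V}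
    (hW : D.OpenWalk S x y n f) {i k : ℕ} (hk : i + k + 1 ≤ n) (hf : f i = f (i + k + 1)) :
    D.OpenWalk S x y (n - (k + 1)) (fun t => if t ≤ i then f t else f (t + (k + 1))) := by
  have hg : ∀ t, i ≤ t → (if t ≤ i then f t else f (t + (k + 1))) = f (t + (k + 1)) := by
    intro t ht
    split_ifs with h
    · obtain rfl : t = i := by omega
      exact hf
    · rfl
  have hg' : ∀ t, t ≤ i → (if t ≤ i then f t else f (t + (k + 1))) = f t := by
    intro t ht
    rw [if_pos ht]
  refine ⟨?_, ?_, ?_, ?_⟩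
  · simp [hW.first]
  · show (if n - (k + 1) ≤ i then _ else _) = y
    rw [hg _ (by omega), ← hW.last]
    congr 1; omega
  · intro t ht
    show D.Adj (if t ≤ i then _ else _) (if t + 1 ≤ i then _ else _)
    by_cases h : i ≤ t
    · rw [hg _ h, hg _ (by omega)]
      have := hW.adj (t + (k + 1)) (by omega)
      rwa [show t + (k + 1) + 1 = t + 1 + (k + 1) by omega] at this
    · rw [hg' _ (by omega), hg' _ (by omega)]
      exact hW.adj t (by omega)
  · intro t ht
    show D.OpenAt S (if t ≤ i then _ else _) (if t + 1 ≤ i then _ else _)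
      (if t + 2 ≤ i then _ else _)
    by_cases h : i ≤ t
    · rw [hg _ h, hg _ (by omega), hg _ (by omega)]
      have := hW.opn (t + (k + 1)) (by omega)
      rwa [show t + (k + 1) + 1 = t + 1 + (k + 1) by omega,
        show t + (k + 1) + 2 = t + 2 + (k + 1) by omega] at this
    · by_cases h2 : t + 2 ≤ i
      · rw [hg' _ (by omega), hg' _ (by omega), hg' _ h2]
        exact hW.opn t (by omega)
      · obtain rfl : i = t + 1 := by omega
        rw [hg' _ (by omega), hg' _ (by omega), hg _ (by omega)]
        have o1 := hW.opn t (by omega)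
        have o2 := hW.opn (t + 1 + k) (by omega)
        have a1 := hW.adj (t + 1) (by omega)
        have a2 := hW.adj (t + 1 + k) (by omega)
        have hd := walk_des hW k (t + 1) (by omega)
        rw [show t + 1 + k + 2 = t + 2 + (k + 1) by omega] at o2
        rw [← hf] at o2 a2 hd
        unfold OpenAt at *
        rw [show t + 1 + 1 = t + 2 by omega] at a1 hd
        unfold Adj at a1 a2
        by_cases hS : f (t + 1) ∈ S
        · have := HasDes.self (D := D) hS
          tauto
        · tauto

theorem not_dSep_of_reach {D : Dag V} {S : Set V} {x y : V} {d : Mark}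
    (h : D.Reach S x y d) : ¬ D.dSep x y S := by
  obtain ⟨n0, f0, hW0, -⟩ := walk_of_reach h
  have hex : ∃ n, ∃ f, D.OpenWalk S x y n f := ⟨n0, f0, hW0⟩
  classical
  obtain ⟨f, hW⟩ := Nat.find_spec hex
  have hmin := fun m => @Nat.find_min _ _ hex m
  set n := Nat.find hex
  have hinj : ∀ i j, i < j → j ≤ n → f i ≠ f j := by
    intro i j hij hj hf
    obtain ⟨k, rfl⟩ := Nat.exists_eq_add_of_lt hij
    exact hmin (n - (k + 1)) (by omega) ⟨_, splice hW hj hf⟩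
  intro hsep
  let p : GPath D.Adj x y :=
    { n := n
      f := fun i => f i
      inj := by
        intro i j hij
        by_contra hne
        rcases lt_or_gt_of_ne hne with hl | hl
        · exact hinj i j hl (by omega) hij
        · exact hinj j i hl (by omega) hij.symm
      first := hW.first
      last := hW.last
      adj := fun i => hW.adj i i.2 }
  obtain ⟨i, h0, hi, hb⟩ := hsep p
  change i < n at hi
  obtain ⟨j, rfl⟩ : ∃ j, i = j + 1 := ⟨i - 1, by omega⟩
  have ho := hW.opn j hi
  have hc : p.ColliderAt D.edge (j + 1) ↔ D.edge (f j) (f (j + 1)) ∧ D.edge (f (j + 2)) (f (j + 1)) := by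
    constructor
    · rintro ⟨_, _, h1, h2⟩; exact ⟨h1, h2⟩
    · rintro ⟨h1, h2⟩; exact ⟨h0, hi, h1, h2⟩
  rw [hc] at hb
  have hpf : p.f ⟨j + 1, by change j + 1 < n + 1; omega⟩ = f (j + 1) := rfl
  rcases hb with ⟨h1, h2⟩ | ⟨h1, h2⟩
  · rcases ho with h | h
    · exact h1 ⟨h.1, h.2.1⟩
    · exact h.2 h2
  · rcases ho with h | h
    · obtain ⟨e, he, heS⟩ := h.2.2
      exact h2 e he heS
    · exact h.1 h1

theorem dSep_iff {D : Dag V} {S : Set V} {x y : V} :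
    D.dSep x y S ↔ ∀ d, ¬ D.Reach S x y d := by
  constructor
  · intro h d hr; exact not_dSep_of_reach hr h
  · intro h; by_contra hc
    obtain ⟨d, hr⟩ := reach_of_not_dSep hc
    exact h d hr

/-! ### Covered edge reversal -/

/-- `D'` arises from `D` by reversing the covered edge `x → y`. -/
structure Cov (D D' : Dag V) (x y : V) : Prop where
  e : D.edge x y
  e' : D'.edge y x
  same : ∀ a b, ¬ (a = x ∧ b = y) → ¬ (a = y ∧ b = x) → (D.edge a b ↔ D'.edge a b)
  cov : ∀ p, p ≠ x → (D.edge p y ↔ D.edge p x)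

theorem Cov.symm {D D' : Dag V} {x y : V} (h : Cov D D' x y) : Cov D' D y x := by
  have hne := edge_ne h.e
  refine ⟨h.e', h.e, fun a b h1 h2 => (h.same a b h2 h1).symm, ?_⟩
  intro p hp
  by_cases hpx : p = x
  · subst hpx
    exact ⟨fun hh => absurd hh edge_irrefl, fun hh => absurd hh (edge_asymm h.e')⟩
  · rw [← h.same p x (by tauto) (by tauto), ← h.same p y (by tauto) (by tauto)]
    exact (h.cov p hpx).symm

theorem Cov.des {D D' : Dag V} {x y : V} (h : Cov D D' x y) {S : Set V} {v : V}
    (hv : D.HasDes S v) : (v ≠ x → D'.HasDes S v) ∧ (v = x → D'.HasDes S x ∨ D'.HasDes S y) := by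
  obtain ⟨d, hd, hS⟩ := hv
  induction hd using Relation.ReflTransGen.head_induction_on with
  | refl => exact ⟨fun _ => HasDes.self hS, fun hh => Or.inl (HasDes.self (hh ▸ hS))⟩
  | @head a c hac hcd ih =>
    constructor
    · intro hax
      by_cases hcx : c = x
      · subst hcx
        have hay : a ≠ y := by rintro rfl; exact edge_asymm h.e hac
        have e1 : D'.edge a c := (h.same a c (by tauto) (by tauto)).1 hac
        have e2 : D'.edge a y := (h.same a y (by tauto) (by tauto)).1 ((h.cov a hax).2 hac)
        rcases ih.2 rfl with hh | hh
        · exact HasDes.step e1 hh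
        · exact HasDes.step e2 hh
      · exact HasDes.step ((h.same a c (by tauto) (by tauto)).1 hac) (ih.1 hcx)
    · rintro rfl
      have hca : c ≠ a := (edge_ne hac).symm
      by_cases hcy : c = y
      · subst hcy
        exact Or.inr (ih.1 hca)
      · exact Or.inl (HasDes.step ((h.same a c (by tauto) (by tauto)).1 hac) (ih.1 hca))

/-- The simulation invariant for covered edge reversal. -/
def Sim (D' : Dag V) (x y : V) (S : Set V) (s v : V) (d : Mark) : Prop :=
  (v ≠ x → v ≠ y → D'.Reach S s v d) ∧
  (v = x → d = Mark.st → D'.Reach S s x Mark.st) ∧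
  (v = x → d = Mark.hd → D'.Reach S s x Mark.hd ∧ D'.Reach S s y Mark.hd) ∧
  (v = x → d = Mark.tl → D'.Reach S s x Mark.tl ∨ D'.Reach S s x Mark.st ∨
    (D'.Reach S s x Mark.hd ∧ (D'.Reach S s y Mark.st ∨ (D'.Reach S s y Mark.tl ∧ y ∉ S) ∨
      (D'.Reach S s y Mark.hd ∧ D'.HasDes S y)))) ∧
  (v = y → d = Mark.st → D'.Reach S s y Mark.st) ∧
  (v = y → d = Mark.tl → D'.Reach S s y Mark.tl) ∧
  (v = y → d = Mark.hd → (D'.Reach S s x Mark.hd ∧ D'.Reach S s y Mark.hd) ∨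
    (D'.Reach S s y Mark.tl ∧ (D'.Reach S s x Mark.st ∨ (D'.Reach S s x Mark.tl ∧ x ∉ S))) ∨
    D'.Reach S s y Mark.st ∨ (D'.Reach S s y Mark.tl ∧ y ∉ S))

theorem Cov.reach {D D' : Dag V} {x y : V} (h : Cov D D' x y) {S : Set V} {s v : V} {d : Mark}
    (hr : D.Reach S s v d) : Sim D' x y S s v d := by
  have hxy : x ≠ y := edge_ne h.e
  have he' := h.e'
  have hyx : ¬ D.edge y x := edge_asymm h.e
  have F : ∀ {v w : V} {d : Mark}, D'.Reach S s v d → D'.edge v w → (d = Mark.st ∨ v ∉ S) →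
    D'.Reach S s w Mark.hd := fun a b c => Reach.fwd a b c
  have Bst : ∀ {v w : V}, D'.Reach S s v Mark.st → D'.edge w v →
    D'.Reach S s w Mark.tl := fun a b => Reach.bwd a b (Or.inl rfl)
  have Btl : ∀ {v w : V}, D'.Reach S s v Mark.tl → D'.edge w v → v ∉ S →
    D'.Reach S s w Mark.tl := fun a b c => Reach.bwd a b (Or.inr (Or.inl ⟨rfl, c⟩))
  have Bhd : ∀ {v w : V}, D'.Reach S s v Mark.hd → D'.edge w v → D'.HasDes S v →
    D'.Reach S s w Mark.tl := fun a b c => Reach.bwd a b (Or.inr (Or.inr ⟨rfl, c⟩))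
  have par : ∀ {p : V}, p ≠ x → (D.edge p x ∨ D.edge p y) → D'.edge p x ∧ D'.edge p y := by
    intro p hp hpe
    have h1 : D.edge p x := hpe.elim id (h.cov p hp).1
    have hpy : p ≠ y := by rintro rfl; exact hyx h1
    exact ⟨(h.same p x (by tauto) (by tauto)).1 h1,
      (h.same p y (by tauto) (by tauto)).1 ((h.cov p hp).2 h1)⟩
  have oth : ∀ {a b : V}, D.edge a b → b ≠ y → D'.edge a b := by
    intro a b hab hb
    refine (h.same a b (by tauto) ?_).1 hab
    rintro ⟨rfl, rfl⟩; exact hyx hab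
  have des1 : ∀ {v : V}, D.HasDes S v → v ≠ x → D'.HasDes S v := fun hv => (h.des hv).1
  have des2 : D.HasDes S x → D'.HasDes S x ∨ D'.HasDes S y := fun hv => (h.des hv).2 rfl
  induction hr with
  | start =>
    have hs : D'.Reach S s s Mark.st := Reach.start
    unfold Sim
    grind
  | @fwd v w d hr he hd ih =>
    have hvw := edge_ne he
    by_cases hwx : w = x
    · subst hwx
      have hvy : v ≠ y := by rintro rfl; exact hyx he
      have := par hvw (Or.inl he)
      have r := ih.1 hvw hvy
      have r1 := F r this.1 hd
      have r2 := F r this.2 hd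
      unfold Sim
      grind
    by_cases hwy : w = y
    · subst hwy
      by_cases hvx : v = x
      · subst hvx
        unfold Sim at *
        cases d <;> grind
      · have := par hvx (Or.inr he)
        have r := ih.1 hvx hvw
        have r1 := F r this.1 hd
        have r2 := F r this.2 hd
        unfold Sim
        grind
    · have e1 := oth he hwy
      suffices D'.Reach S s w Mark.hd by unfold Sim; grind
      unfold Sim at ih
      by_cases hvx : v = x
      · subst hvx
        cases d <;> grind
      by_cases hvy : v = y
      · subst hvy
        cases d <;> grind
      · exact F (ih.1 hvx hvy) e1 hd
  | @bwd v w d hr he hd ih =>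
    have hvw := edge_ne he
    by_cases hvx : v = x
    · subst hvx
      have hwy : w ≠ y := by rintro rfl; exact hyx he
      have e1 := par hvw (Or.inl he)
      suffices D'.Reach S s w Mark.tl by unfold Sim; grind
      unfold Sim at ih
      cases d <;> grind
    by_cases hvy : v = y
    · subst hvy
      by_cases hwx : w = x
      · subst hwx
        unfold Sim at *
        cases d <;> grind
      · have e1 := par hwx (Or.inr he)
        suffices D'.Reach S s w Mark.tl by unfold Sim; grind
        unfold Sim at ih
        cases d <;> grind
    · have e1 := oth he hvy
      have r := ih.1 hvx hvy
      suffices D'.Reach S s w Mark.tl by unfold Sim; grind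
      cases d <;> grind

theorem Cov.dSep_imp {D D' : Dag V} {x y : V} (h : Cov D D' x y) {S : Set V} {s t : V}
    (hs : D'.dSep s t S) : D.dSep s t S := by
  rw [dSep_iff] at *
  intro d hr
  have := h.reach hr
  unfold Sim at this
  by_cases hvx : t = x
  · subst hvx
    cases d <;> grind
  by_cases hvy : t = y
  · subst hvy
    cases d <;> grind
  · exact hs _ (this.1 hvx hvy)

theorem Cov.mequiv {D D' : Dag V} {x y : V} (h : Cov D D' x y) : D.MEquiv D' :=
  fun _ _ _ => ⟨fun hs => h.symm.dSep_imp hs, fun hs => h.dSep_imp hs⟩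

/-- Reverse a covered edge. -/
def flip (D : Dag V) (x y : V) (hxy : D.edge x y)
    (cov : ∀ p, p ≠ x → (D.edge p y → D.edge p x)) : Dag V where
  edge a b := (a = y ∧ b = x) ∨ (D.edge a b ∧ ¬ (a = x ∧ b = y))
  acyclic := by
    set E0 : V → V → Prop := fun a b => D.edge a b ∧ ¬ (a = x ∧ b = y) with hE0
    have lift : ∀ {u v}, Relation.ReflTransGen E0 u v → Relation.ReflTransGen D.edge u v :=
      fun hh => rtg_mono (fun _ _ h => h.1) hh
    have N : ¬ Relation.ReflTransGen E0 x y := by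
      intro hh
      rcases Relation.ReflTransGen.cases_tail hh with rfl | ⟨p, hxp, hp⟩
      · exact edge_irrefl hxy
      · have hpx : p ≠ x := fun e => hp.2 ⟨e, rfl⟩
        exact D.acyclic p x (cov p hpx hp.1) (lift hxp)
    have key : ∀ {u v}, Relation.ReflTransGen (fun a b => (a = y ∧ b = x) ∨ E0 a b) u v →
        Relation.ReflTransGen E0 u v ∨
          (Relation.ReflTransGen E0 u y ∧ Relation.ReflTransGen E0 x v) := by
      intro u v hh
      induction hh with
      | refl => exact Or.inl Relation.ReflTransGen.refl
      | @tail b c hb hbc ih =>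
        rcases hbc with ⟨rfl, rfl⟩ | hbc
        · refine Or.inr ⟨?_, Relation.ReflTransGen.refl⟩
          rcases ih with ih | ih
          · exact ih
          · exact ih.1
        · rcases ih with ih | ih
          · exact Or.inl (ih.tail hbc)
          · exact Or.inr ⟨ih.1, ih.2.tail hbc⟩
    intro a b hab hba
    rcases hab with ⟨rfl, rfl⟩ | hab
    · rcases key hba with hh | hh
      · exact N hh
      · exact N hh.1
    · rcases key hba with hh | hh
      · exact D.acyclic a b hab.1 (lift hh)
      · exact N ((hh.2.tail hab).trans hh.1)

theorem flip_cov (D : Dag V) (x y : V) (hxy : D.edge x y)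
    (cov : ∀ p, p ≠ x → (D.edge p y ↔ D.edge p x)) :
    Cov D (D.flip x y hxy (fun p hp => (cov p hp).1)) x y := by
  refine ⟨hxy, Or.inl ⟨rfl, rfl⟩, ?_, cov⟩
  intro a b h1 h2
  unfold flip
  simp only
  tauto

/-! ### Skeleton and v-structures -/

/-- Unshielded collider. -/
def VS (D : Dag V) (a c b : V) : Prop := D.edge a c ∧ D.edge b c ∧ a ≠ b ∧ ¬ D.Adj a b

structure Same (D D' : Dag V) : Prop where
  adj : ∀ a b, D.Adj a b ↔ D'.Adj a b
  vs : ∀ a c b, D.VS a c b ↔ D'.VS a c b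

theorem Same.symm {D D' : Dag V} (h : Same D D') : Same D' D :=
  ⟨fun a b => (h.adj a b).symm, fun a c b => (h.vs a c b).symm⟩

theorem Same.trans {D D' D'' : Dag V} (h : Same D D') (h' : Same D' D'') : Same D D'' :=
  ⟨fun a b => (h.adj a b).trans (h'.adj a b), fun a c b => (h.vs a c b).trans (h'.vs a c b)⟩

theorem Cov.adj {D D' : Dag V} {x y : V} (h : Cov D D' x y) {a b : V} (hab : D.Adj a b) :
    D'.Adj a b := by
  by_cases h1 : a = x ∧ b = y
  · obtain ⟨rfl, rfl⟩ := h1; exact Or.inr h.e'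
  by_cases h2 : a = y ∧ b = x
  · obtain ⟨rfl, rfl⟩ := h2; exact Or.inl h.e'
  unfold Adj at *
  rw [← h.same a b h1 h2, ← h.same b a (by tauto) (by tauto)]
  exact hab

theorem Cov.vs {D D' : Dag V} {x y : V} (h : Cov D D' x y) {a c b : V} (hv : D.VS a c b) :
    D'.VS a c b := by
  have key : ∀ {a b}, D.VS a c b → D'.edge a c := by
    rintro a b ⟨h1, h2, h3, h4⟩
    refine (h.same a c ?_ ?_).1 h1
    · rintro ⟨rfl, rfl⟩
      exact h4 (Or.inr ((h.cov b h3.symm).1 h2))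
    · rintro ⟨rfl, rfl⟩; exact edge_asymm h.e h1
  refine ⟨key hv, key (a := b) (b := a) ⟨hv.2.1, hv.1, hv.2.2.1.symm, fun hh => hv.2.2.2 (Or.symm hh)⟩,
    hv.2.2.1, fun hh => hv.2.2.2 (h.symm.adj hh)⟩

theorem Cov.toSame {D D' : Dag V} {x y : V} (h : Cov D D' x y) : Same D D' :=
  ⟨fun _ _ => ⟨h.adj, h.symm.adj⟩, fun _ _ _ => ⟨h.vs, h.symm.vs⟩⟩

theorem MEquiv.trans' {D D' D'' : Dag V} (h : D.MEquiv D') (h' : D'.MEquiv D'') : D.MEquiv D'' :=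
  fun x y S => (h x y S).trans (h' x y S)

theorem Same.exists_cov [Finite V] {D D' : Dag V} (h : Same D D') {u w : V} (h1 : D.edge u w)
    (h2 : D'.edge w u) : ∃ x y, D.edge x y ∧ D'.edge y x ∧
      ∀ p, p ≠ x → (D.edge p y ↔ D.edge p x) := by
  obtain ⟨y, ⟨x0, hx0⟩, hymin⟩ := (edge_wf D).has_min
    {y | ∃ x, D.edge x y ∧ D'.edge y x} ⟨w, u, h1, h2⟩
  have hymin : ∀ z, D.edge z y → ∀ a, D.edge a z → D'.edge a z := by
    intro z hz a ha
    rcases (h.adj a z).1 (Or.inl ha) with h' | h'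
    · exact h'
    · exact absurd hz (hymin z ⟨a, ha, h'⟩)
  have wf' := edge_wf_swap D
  obtain ⟨x, ⟨hxy, hyx⟩, hxmax⟩ := wf'.has_min {x | D.edge x y ∧ D'.edge y x} ⟨x0, hx0⟩
  refine ⟨x, y, hxy, hyx, ?_⟩
  intro z hzx
  constructor
  · intro hzy
    by_contra hn
    by_cases hadj : D.Adj z x
    · have hxz : D.edge x z := hadj.resolve_left hn
      have e1 : D'.edge x z := hymin z hzy x hxz
      have e2 : D'.edge z y := by
        rcases (h.adj z y).1 (Or.inl hzy) with h' | h'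
        · exact h'
        · exact absurd hxz (hxmax z ⟨hzy, h'⟩)
      exact edge_tri e1 e2 hyx
    · exact edge_asymm hyx ((h.vs z y x).1 ⟨hzy, hxy, hzx, hadj⟩).2.1
  · intro hzx'
    have e1 : D'.edge z x := hymin x hxy z hzx'
    by_cases hadj : D.Adj z y
    · exact edge_of_tri hzx' hxy hadj
    · have hne : z ≠ y := by rintro rfl; exact edge_asymm hxy hzx'
      exact absurd ((h.vs z x y).2 ⟨e1, hyx, hne, fun hh => hadj ((h.adj z y).2 hh)⟩).2.1
        (edge_asymm hxy)

theorem Same.mequiv [Finite V] {D D' : Dag V} (h : Same D D') : D.MEquiv D' := by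
  generalize hn : Set.ncard {e : V × V | D.edge e.1 e.2 ∧ D'.edge e.2 e.1} = n
  induction n using Nat.strong_induction_on generalizing D with
  | _ n ih =>
    by_cases hex : ∃ u w, D.edge u w ∧ D'.edge w u
    · obtain ⟨u, w, h1, h2⟩ := hex
      obtain ⟨x, y, hxy, hyx, hcov⟩ := h.exists_cov h1 h2
      have hc := flip_cov D x y hxy hcov
      refine MEquiv.trans' hc.mequiv (ih _ ?_ (hc.toSame.symm.trans h) rfl)
      rw [← hn]
      refine Set.ncard_lt_ncard ?_ (Set.toFinite _)
      refine ⟨?_, fun hsub => ?_⟩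
      · rintro ⟨a, b⟩ ⟨ha, hb⟩
        rcases ha with ⟨rfl, rfl⟩ | ha
        · exact absurd hb (edge_asymm hyx)
        · exact ⟨ha.1, hb⟩
      · have := hsub (show (x, y) ∈ _ from ⟨hxy, hyx⟩)
        exact edge_asymm hc.e' this.1
    · push Not at hex
      have : D = D' := by
        have he : D.edge = D'.edge := by
          funext a b
          apply propext
          constructor
          · intro hab
            exact ((h.adj a b).1 (Or.inl hab)).resolve_right (hex a b hab)
          · intro hab
            exact ((h.adj a b).2 (Or.inl hab)).resolve_right (fun hh => hex b a hh hab)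
        cases D; cases D'; cases he; rfl
      subst this
      exact fun _ _ _ => Iff.rfl

theorem not_dSep_of_adj {D : Dag V} {a b : V} (h : D.Adj a b) (S : Set V) : ¬ D.dSep a b S := by
  rcases h with h | h
  · exact not_dSep_of_reach (Reach.fwd Reach.start h (Or.inl rfl))
  · exact not_dSep_of_reach (Reach.bwd Reach.start h (Or.inl rfl))

theorem dSep_pa {D : Dag V} {a b : V} (hne : a ≠ b) (h : ¬ D.Adj a b) (hn : ¬ D.Anc a b) :
    D.dSep a b (D.Pa a) := by
  rw [dSep_iff]
  have key : ∀ v d, D.Reach (D.Pa a) a v d → (v = a ∧ d = Mark.st) ∨ (D.edge v a ∧ d = Mark.tl) ∨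
      (Relation.TransGen D.edge a v ∧ d = Mark.hd) := by
    intro v d hr
    induction hr with
    | start => exact Or.inl ⟨rfl, rfl⟩
    | @fwd v w d hr he hd ih =>
      rcases ih with ⟨rfl, _⟩ | ⟨h1, rfl⟩ | ⟨h1, rfl⟩
      · exact Or.inr (Or.inr ⟨Relation.TransGen.single he, rfl⟩)
      · rcases hd with hd | hd
        · cases hd
        · exact absurd h1 hd
      · exact Or.inr (Or.inr ⟨h1.tail he, rfl⟩)
    | @bwd v w d hr he hd ih =>
      rcases ih with ⟨rfl, _⟩ | ⟨h1, rfl⟩ | ⟨h1, rfl⟩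
      · exact Or.inr (Or.inl ⟨he, rfl⟩)
      · rcases hd with hd | ⟨_, hd⟩ | ⟨hd, _⟩
        · cases hd
        · exact absurd h1 hd
        · cases hd
      · rcases hd with hd | ⟨hd, _⟩ | ⟨_, hd⟩
        · cases hd
        · cases hd
        · obtain ⟨e, he1, he2⟩ := hd
          exact absurd (h1.to_reflTransGen.trans he1) (D.acyclic e a he2)
  intro d hr
  rcases key b d hr with ⟨h1, _⟩ | ⟨h1, _⟩ | ⟨h1, _⟩
  · exact hne h1.symm
  · exact h (Or.inr h1)
  · exact hn h1.to_reflTransGen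

theorem MEquiv.adj {D D' : Dag V} (h : D.MEquiv D') {a b : V} (hab : D.Adj a b) : D'.Adj a b := by
  by_contra hn
  have hne := adj_ne hab
  by_cases hanc : D'.Anc a b
  · have hba : ¬ D'.Anc b a := by
      intro hba
      rcases Relation.ReflTransGen.cases_head hanc with rfl | ⟨c, hc, hcb⟩
      · exact hne rfl
      · exact D'.acyclic a c hc (hcb.trans hba)
    exact not_dSep_of_adj (adj_comm' hab) _
      ((h b a _).2 (dSep_pa hne.symm (fun hh => hn (Or.symm hh)) hba))
  · exact not_dSep_of_adj hab _ ((h a b _).2 (dSep_pa hne hn hanc))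

theorem MEquiv.symm' {D D' : Dag V} (h : D.MEquiv D') : D'.MEquiv D :=
  fun x y S => (h x y S).symm

theorem MEquiv.vs {D D' : Dag V} (h : D.MEquiv D') {a c b : V} (hv : D.VS a c b) :
    D'.VS a c b := by
  have key : ∀ {a b}, D.VS a c b → ¬ D.Anc a b → D'.edge a c ∧ D'.edge b c := by
    rintro a b ⟨h1, h2, h3, h4⟩ hanc
    have hsep := (h a b _).1 (dSep_pa h3 h4 hanc)
    have hcS : c ∉ D.Pa a := edge_asymm h1
    rw [dSep_iff] at hsep
    have a1 := h.adj (Or.inl h1 : D.Adj a c)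
    have a2 := h.adj (Or.inl h2 : D.Adj b c)
    rcases a1 with a1 | a1
    · refine ⟨a1, ?_⟩
      rcases a2 with a2 | a2
      · exact a2
      · exact absurd (Reach.fwd (Reach.fwd Reach.start a1 (Or.inl rfl)) a2 (Or.inr hcS)) (hsep _)
    · have r := Reach.bwd (S := D.Pa a) Reach.start a1 (Or.inl rfl)
      rcases a2 with a2 | a2
      · exact absurd (Reach.bwd r a2 (Or.inr (Or.inl ⟨rfl, hcS⟩))) (hsep _)
      · exact absurd (Reach.fwd r a2 (Or.inr hcS)) (hsep _)
  have hn : ¬ D'.Adj a b := fun hh => hv.2.2.2 (h.symm'.adj hh)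
  by_cases hanc : D.Anc a b
  · have hba : ¬ D.Anc b a := by
      intro hba
      rcases Relation.ReflTransGen.cases_head hanc with rfl | ⟨c, hc, hcb⟩
      · exact hv.2.2.1 rfl
      · exact D.acyclic a c hc (hcb.trans hba)
    have := key (a := b) (b := a)
      ⟨hv.2.1, hv.1, hv.2.2.1.symm, fun hh => hv.2.2.2 (Or.symm hh)⟩ hba
    exact ⟨this.2, this.1, hv.2.2.1, hn⟩
  · have := key hv hanc
    exact ⟨this.1, this.2, hv.2.2.1, hn⟩

theorem MEquiv.same {D D' : Dag V} (h : D.MEquiv D') : Same D D' :=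
  ⟨fun _ _ => ⟨h.adj, h.symm'.adj⟩, fun _ _ _ => ⟨h.vs, h.symm'.vs⟩⟩

/-! ### Meek closure -/

/-- Edges forced by v-structures and Meek's rules. -/
inductive K (D : Dag V) : V → V → Prop
  | vs {a b c : V} : D.VS a c b → K D a c
  | r1 {d a b : V} : K D d a → D.edge a b → d ≠ b → ¬ D.Adj d b → K D a b
  | r2 {a d b : V} : K D a d → K D d b → D.Adj a b → K D a b
  | r3 {a b e f : V} : D.Adj a e → D.Adj a f → D.Adj a b → K D e b → K D f b → e ≠ f →
      ¬ D.Adj e f → ¬ (D.edge e a ∧ D.edge f a) → K D a b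

theorem K.sound {D D' : Dag V} (h : Same D D') {a b : V} (hk : D.K a b) : D'.edge a b := by
  induction hk with
  | vs hv => exact ((h.vs _ _ _).1 hv).1
  | @r1 d a b _ hab hne hn ih =>
    refine ((h.adj a b).1 (Or.inl hab)).resolve_right fun hba => ?_
    have hn' : ¬ D'.Adj d b := fun hh => hn ((h.adj _ _).2 hh)
    exact edge_asymm hab ((h.vs _ _ _).2 ⟨ih, hba, hne, hn'⟩).2.1
  | r2 _ _ hab ih1 ih2 => exact edge_of_tri ih1 ih2 ((h.adj _ _).1 hab)
  | @r3 a b e f hae haf hab _ _ hne hn hnv ih1 ih2 =>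
    refine ((h.adj a b).1 hab).resolve_right fun hba => hnv ?_
    have e1 := edge_of_tri ih1 hba (adj_comm' ((h.adj _ _).1 hae))
    have e2 := edge_of_tri ih2 hba (adj_comm' ((h.adj _ _).1 haf))
    have := (h.vs _ _ _).2 ⟨e1, e2, hne, fun hh => hn ((h.adj _ _).2 hh)⟩
    exact ⟨this.1, this.2.1⟩

theorem Same.refl' (D : Dag V) : Same D D := ⟨fun _ _ => Iff.rfl, fun _ _ _ => Iff.rfl⟩

theorem K.edge {D : Dag V} {a b : V} (hk : D.K a b) : D.edge a b := hk.sound (Same.refl' D)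

theorem K.adj {D : Dag V} {a b : V} (hk : D.K a b) : D.Adj a b := Or.inl hk.edge

theorem VS.symm {D : Dag V} {a c b : V} (h : D.VS a c b) : D.VS b c a :=
  ⟨h.2.1, h.1, h.2.2.1.symm, fun hh => h.2.2.2 (Or.symm hh)⟩

theorem K.r1' {D : Dag V} {d a b : V} (hk : D.K d a) (hab : D.Adj a b) (hne : d ≠ b)
    (hn : ¬ D.Adj d b) : D.K a b ∨ D.K b a := by
  rcases hab with h | h
  · exact Or.inl (K.r1 hk h hne hn)
  · exact Or.inr (K.vs (VS.symm ⟨hk.edge, h, hne, hn⟩))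

/-- Undetermined edges. -/
def H (D : Dag V) (a b : V) : Prop := D.Adj a b ∧ ¬ D.K a b ∧ ¬ D.K b a

theorem H.symm {D : Dag V} {a b : V} (h : D.H a b) : D.H b a := ⟨Or.symm h.1, h.2.2, h.2.1⟩

theorem adj_of_K_H {D : Dag V} {a b c : V} (hk : D.K a b) (hH : D.H b c) : D.Adj a c := by
  by_contra hn
  have hne : a ≠ c := by rintro rfl; exact hH.2.2 hk
  rcases hk.r1' hH.1 hne hn with h | h
  · exact hH.2.1 h
  · exact hH.2.2 h

theorem K_of_vs_H {D : Dag V} {a d b c : V} (ha : D.K a b) (hd : D.K d b) (hne : a ≠ d)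
    (hn : ¬ D.Adj a d) (hH : D.H b c) : D.K a c ∧ D.K d c := by
  by_cases hv : D.edge a c ∧ D.edge d c
  · have : D.VS a c d := ⟨hv.1, hv.2, hne, hn⟩
    exact ⟨K.vs this, K.vs this.symm⟩
  · exact absurd (K.r3 (Or.symm (adj_of_K_H ha hH)) (Or.symm (adj_of_K_H hd hH)) (Or.symm hH.1)
      ha hd hne hn hv) hH.2.2

/-- The chain graph property. -/
theorem K_chain [Finite V] {D : Dag V} : ∀ b a c : V, D.K a b → D.H b c → D.K a c := by
  intro b
  induction b using (edge_wf D).induction with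
  | _ b ih =>
    intro a c hk hH
    have hac := adj_of_K_H hk hH
    have hk' := hk
    cases hk with
    | @vs _ d _ hv => exact (K_of_vs_H (K.vs hv) (K.vs hv.symm) hv.2.2.1 hv.2.2.2 hH).1
    | @r1 d _ _ hda hab hne hn =>
      by_contra hnac
      by_cases hca : D.K c a
      · exact hH.2.2 (K.r2 hca hk' (Or.symm hH.1))
      · have hdc := ih a hab d c hda ⟨hac, hnac, hca⟩
        rcases hdc.r1' (Or.symm hH.1) hne hn with h | h
        · exact hH.2.2 h
        · exact hH.2.1 h
    | @r2 _ d _ had hdb hab =>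
      have hdc := adj_of_K_H hdb hH
      by_cases h1 : D.K d c
      · exact K.r2 had h1 hac
      by_cases h2 : D.K c d
      · exact absurd (K.r2 h2 hdb (Or.symm hH.1)) hH.2.2
      · exact ih d hdb.edge a c had ⟨hdc, h1, h2⟩
    | @r3 _ _ e f hae haf hab heb hfb hne hn hv =>
      have := K_of_vs_H heb hfb hne hn hH
      exact K.r3 hae haf hac this.1 this.2 hne hn hv

theorem K_chain_trans [Finite V] {D : Dag V} {a b c : V} (h : Relation.TransGen D.K a b)
    (hbc : D.K b c ∨ D.H b c) : Relation.TransGen D.K a c := by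
  rcases hbc with hbc | hbc
  · exact h.tail hbc
  · rcases Relation.TransGen.tail'_iff.1 h with ⟨e, hae, heb⟩
    exact Relation.TransGen.tail'_iff.2 ⟨e, hae, K_chain b e c heb hbc⟩

theorem K_no_cycle {D : Dag V} {a : V} : ¬ Relation.TransGen D.K a a := by
  intro h
  obtain ⟨b, hab, hba⟩ := Relation.TransGen.head'_iff.1 h
  exact D.acyclic a b hab.edge (rtg_mono (fun _ _ h => K.edge h) hba)

theorem H_moral [Finite V] {D : Dag V} {a b c : V} (hac : D.H a c) (hbc : D.H b c)
    (ea : D.edge a c) (eb : D.edge b c) (hne : a ≠ b) : D.H a b := by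
  refine ⟨?_, ?_, ?_⟩
  · by_contra hn
    exact hac.2.1 (K.vs ⟨ea, eb, hne, hn⟩)
  · intro hk
    exact hac.2.1 (K_chain b a c hk hbc)
  · intro hk
    exact hbc.2.1 (K_chain a b c hk hac)

/-! ### Perfect orderings -/

/-- `s` is simplicial within `T`. -/
def Simp (D : Dag V) (T : Finset V) (s : V) : Prop :=
  ∀ a ∈ T, ∀ b ∈ T, a ≠ b → D.H a s → D.H b s → D.H a b

theorem exists_simp [Finite V] (D : Dag V) (T : Finset V) (hT : T.Nonempty) :
    ∃ s ∈ T, D.Simp T s := by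
  have wf' := edge_wf_swap D
  obtain ⟨s, hs, hmax⟩ := wf'.has_min {s | s ∈ T} hT
  refine ⟨s, hs, ?_⟩
  intro a ha b hb hne h1 h2
  exact H_moral h1 h2 (h1.1.resolve_right (hmax a ha)) (h2.1.resolve_right (hmax b hb)) hne

theorem two_simp [Finite V] (D : Dag V) : ∀ (n : ℕ) (T : Finset V), T.card = n →
    (∃ a ∈ T, ∃ b ∈ T, a ≠ b ∧ ¬ D.H a b) →
    ∃ a ∈ T, ∃ b ∈ T, a ≠ b ∧ ¬ D.H a b ∧ D.Simp T a ∧ D.Simp T b := by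
  classical
  intro n
  induction n with
  | zero =>
    rintro T hT ⟨a, ha, _⟩
    rw [Finset.card_eq_zero] at hT
    subst hT
    simp at ha
  | succ n ih =>
    rintro T hT ⟨a, ha, b, hb, hne, hab⟩
    obtain ⟨s, hs, hsimp⟩ := exists_simp D T ⟨a, ha⟩
    by_cases hc : ∃ a ∈ T.erase s, ∃ b ∈ T.erase s, a ≠ b ∧ ¬ D.H a b
    · obtain ⟨u, hu, v, hv, huv, hn, su, sv⟩ := ih (T.erase s) (by
        rw [Finset.card_erase_of_mem hs, hT]; rfl) hc
      have key : ∀ {w}, w ∈ T.erase s → D.Simp (T.erase s) w → ¬ D.H w s →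
          ∃ a ∈ T, ∃ b ∈ T, a ≠ b ∧ ¬ D.H a b ∧ D.Simp T a ∧ D.Simp T b := by
        intro w hw sw hws
        refine ⟨w, Finset.mem_of_mem_erase hw, s, hs, Finset.ne_of_mem_erase hw, hws, ?_, hsimp⟩
        intro p hp q hq hpq h1 h2
        refine sw p (Finset.mem_erase.2 ⟨?_, hp⟩) q (Finset.mem_erase.2 ⟨?_, hq⟩) hpq h1 h2
        · rintro rfl; exact hws h1.symm
        · rintro rfl; exact hws h2.symm
      by_cases hus : D.H u s
      · by_cases hvs : D.H v s
        · exact absurd (hsimp u (Finset.mem_of_mem_erase hu) v (Finset.mem_of_mem_erase hv)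
            huv hus hvs) hn
        · exact key hv sv hvs
      · exact key hu su hus
    · push Not at hc
      have : ∃ w ∈ T, w ≠ s ∧ ¬ D.H w s := by
        by_cases h1 : a = s
        · subst h1
          exact ⟨b, hb, hne.symm, fun hh => hab hh.symm⟩
        by_cases h2 : b = s
        · subst h2
          exact ⟨a, ha, hne, hab⟩
        · exact absurd (hc a (Finset.mem_erase.2 ⟨h1, ha⟩) b (Finset.mem_erase.2 ⟨h2, hb⟩) hne) hab
      obtain ⟨w, hw, hws, hn⟩ := this
      refine ⟨w, hw, s, hs, hws, hn, ?_, hsimp⟩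
      intro p hp q hq hpq h1 h2
      refine hc p (Finset.mem_erase.2 ⟨?_, hp⟩) q (Finset.mem_erase.2 ⟨?_, hq⟩) hpq
      · rintro rfl; exact hn h1.symm
      · rintro rfl; exact hn h2.symm

theorem exists_simp_ne [Finite V] (D : Dag V) (T : Finset V) (y : V)
    (h : ∃ z ∈ T, z ≠ y) : ∃ s ∈ T, s ≠ y ∧ D.Simp T s := by
  by_cases hc : ∃ a ∈ T, ∃ b ∈ T, a ≠ b ∧ ¬ D.H a b
  · obtain ⟨a, ha, b, hb, hne, _, sa, sb⟩ := two_simp D _ T rfl hc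
    by_cases hay : a = y
    · exact ⟨b, hb, fun hh => hne (hay.trans hh.symm), sb⟩
    · exact ⟨a, ha, hay, sa⟩
  · push Not at hc
    obtain ⟨z, hz, hzy⟩ := h
    exact ⟨z, hz, hzy, fun a ha b hb hne _ _ => hc a ha b hb hne⟩

theorem exists_rank [Finite V] (D : Dag V) (y : V) : ∀ (n : ℕ) (T : Finset V), T.card = n → y ∈ T →
    ∃ r : V → ℕ, (∀ a ∈ T, ∀ b ∈ T, r a = r b → a = b) ∧ (∀ a ∈ T, r y ≤ r a) ∧
      (∀ a ∈ T, ∀ b ∈ T, ∀ c ∈ T, a ≠ b → D.H a c → D.H b c → r a < r c → r b < r c → D.H a b) := by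
  classical
  intro n
  induction n with
  | zero =>
    intro T hT hy
    rw [Finset.card_eq_zero] at hT
    subst hT
    simp at hy
  | succ n ih =>
    intro T hT hy
    by_cases hz : ∃ z ∈ T, z ≠ y
    · obtain ⟨s, hs, hsy, hsimp⟩ := exists_simp_ne D T y hz
      obtain ⟨r, hinj, hmin, hpeo⟩ := ih (T.erase s)
        (by rw [Finset.card_erase_of_mem hs, hT]; rfl) (Finset.mem_erase.2 ⟨hsy.symm, hy⟩)
      have hM : ∀ a ∈ T, r a < T.sup r + 1 := fun a ha =>
        Nat.lt_succ_of_le (Finset.le_sup (f := r) ha)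
      set M := T.sup r + 1
      have mem : ∀ {a}, a ∈ T → a ≠ s → a ∈ T.erase s := fun h1 h2 => Finset.mem_erase.2 ⟨h2, h1⟩
      have hrs : Function.update r s M s = M := by simp
      have hro : ∀ {a}, a ≠ s → Function.update r s M a = r a := fun h => by simp [h]
      refine ⟨Function.update r s M, ?_, ?_, ?_⟩
      · intro a ha b hb hab
        by_cases h1 : a = s <;> by_cases h2 : b = s
        · rw [h1, h2]
        · subst h1; rw [hrs, hro h2] at hab; have := hM b hb; omega
        · subst h2; rw [hrs, hro h1] at hab; have := hM a ha; omega
        · rw [hro h1, hro h2] at hab; exact hinj a (mem ha h1) b (mem hb h2) hab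
      · intro a ha
        rw [hro hsy.symm]
        by_cases h1 : a = s
        · subst h1; rw [hrs]; exact (hM y hy).le
        · rw [hro h1]; exact hmin a (mem ha h1)
      · intro a ha b hb c hc hne h1 h2 h3 h4
        by_cases hcs : c = s
        · subst hcs; exact hsimp a ha b hb hne h1 h2
        · rw [hro hcs] at h3 h4
          have hMc := hM c hc
          have ha' : a ≠ s := by rintro rfl; rw [hrs] at h3; omega
          have hb' : b ≠ s := by rintro rfl; rw [hrs] at h4; omega
          rw [hro ha'] at h3
          rw [hro hb'] at h4
          exact hpeo a (mem ha ha') b (mem hb hb') c (mem hc hcs) hne h1 h2 h3 h4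
    · push Not at hz
      refine ⟨fun _ => 0, ?_, ?_, ?_⟩
      · intro a ha b hb _; rw [hz a ha, hz b hb]
      · intro a _; exact le_rfl
      · intro a ha b hb c hc hne; exact absurd ((hz a ha).trans (hz b hb).symm) hne

/-- Reorient the undetermined edges according to a rank. -/
def reorient [Finite V] (D : Dag V) (r : V → ℕ) : Dag V where
  edge a b := D.K a b ∨ (D.H a b ∧ r a < r b)
  acyclic := by
    have up : ∀ {a b c : V}, Relation.TransGen D.K a b →
        Relation.ReflTransGen (fun a b => D.K a b ∨ (D.H a b ∧ r a < r b)) b c →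
        Relation.TransGen D.K a c := by
      intro a b c h1 h2
      induction h2 with
      | refl => exact h1
      | tail _ h ih => exact K_chain_trans ih (h.imp id And.left)
    have key : ∀ {b c : V},
        Relation.ReflTransGen (fun a b => D.K a b ∨ (D.H a b ∧ r a < r b)) b c →
        r b ≤ r c ∨ ∃ u v, Relation.ReflTransGen
          (fun a b => D.K a b ∨ (D.H a b ∧ r a < r b)) b u ∧ D.K u v ∧
          Relation.ReflTransGen (fun a b => D.K a b ∨ (D.H a b ∧ r a < r b)) v c := by
      intro b c h
      induction h with
      | refl => exact Or.inl le_rfl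
      | @tail p q hp hpq ih =>
        rcases hpq with hk | hk
        · exact Or.inr ⟨p, q, hp, hk, Relation.ReflTransGen.refl⟩
        · rcases ih with ih | ⟨u, v, h1, h2, h3⟩
          · exact Or.inl (ih.trans hk.2.le)
          · exact Or.inr ⟨u, v, h1, h2, h3.tail (Or.inr hk)⟩
    intro a b hab hba
    rcases hab with hk | hk
    · exact K_no_cycle (up (Relation.TransGen.single hk) hba)
    · rcases key hba with h | ⟨u, v, h1, h2, h3⟩
      · have := hk.2; omega
      · exact K_no_cycle (up (Relation.TransGen.single h2)
          ((h3.tail (Or.inr hk)).trans h1))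

theorem exists_reversed [Finite V] (D : Dag V) {x y : V} (hxy : D.H x y) :
    ∃ D' : Dag V, D.MEquiv D' ∧ D'.edge y x := by
  classical
  have := Fintype.ofFinite V
  obtain ⟨r, hinj, hmin, hpeo⟩ := exists_rank D y _ Finset.univ rfl (Finset.mem_univ y)
  simp only [Finset.mem_univ, true_implies] at hinj hmin hpeo
  have hlt : ∀ {a b}, D.H a b → r a < r b ∨ r b < r a := fun h =>
    lt_or_gt_of_ne (fun hh => adj_ne h.1 (hinj _ _ hh))
  have hadj : ∀ a b, D.Adj a b ↔ (D.reorient r).Adj a b := by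
    intro a b
    constructor
    · intro h
      by_cases h1 : D.K a b
      · exact Or.inl (Or.inl h1)
      by_cases h2 : D.K b a
      · exact Or.inr (Or.inl h2)
      have hH : D.H a b := ⟨h, h1, h2⟩
      rcases hlt hH with h3 | h3
      · exact Or.inl (Or.inr ⟨hH, h3⟩)
      · exact Or.inr (Or.inr ⟨hH.symm, h3⟩)
    · rintro ((h | h) | (h | h))
      · exact h.adj
      · exact h.1.1
      · exact Or.symm h.adj
      · exact Or.symm h.1.1
  refine ⟨D.reorient r, Same.mequiv ⟨hadj, ?_⟩, Or.inr ⟨hxy.symm, ?_⟩⟩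
  · intro a c b
    constructor
    · intro hv
      exact ⟨Or.inl (K.vs hv), Or.inl (K.vs hv.symm), hv.2.2.1, fun h => hv.2.2.2 ((hadj _ _).2 h)⟩
    · rintro ⟨h1, h2, hne, hn⟩
      have hn' : ¬ D.Adj a b := fun h => hn ((hadj _ _).1 h)
      rcases h1 with h1 | h1 <;> rcases h2 with h2 | h2
      · exact ⟨h1.edge, h2.edge, hne, hn'⟩
      · exact absurd (adj_of_K_H h1 h2.1.symm) hn'
      · exact absurd (Or.symm (adj_of_K_H h2 h1.1.symm)) hn'
      · exact absurd (hpeo a b c hne h1.1 h2.1 h1.2 h2.2).1 hn'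
  · exact lt_of_le_of_ne (hmin x) (fun h => adj_ne hxy.1 (hinj _ _ h).symm)

theorem MEquiv.refl' (D : Dag V) : D.MEquiv D := fun _ _ _ => Iff.rfl

theorem cpDir_iff [Finite V] {D : Dag V} {a b : V} : D.CpDir a b ↔ D.K a b := by
  constructor
  · intro h
    have e := h D (MEquiv.refl' D)
    by_contra hn
    have hH : D.H a b := ⟨Or.inl e, hn, fun hk => edge_asymm e hk.edge⟩
    obtain ⟨D', hm, he⟩ := exists_reversed D hH
    exact edge_asymm he (h D' hm)
  · intro hk D' hm
    exact hk.sound hm.same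

theorem main_aux [Finite V] (D : Dag V) (X Y : V) (hXY : X ≠ Y)
    (h : D.ExplAn Y X) : ¬ D.PossAn X Y := by
  rintro ⟨q, hq⟩
  obtain ⟨p, hp⟩ := h
  have h1 : ∀ i : ℕ, ∀ hi : i ≤ p.n, Relation.ReflTransGen D.K Y (p.f ⟨i, by omega⟩) := by
    intro i
    induction i with
    | zero => intro _; rw [p.first]
    | succ i ih =>
      intro hi
      exact (ih (by omega)).tail (cpDir_iff.1 (hp ⟨i, by omega⟩))
  have h2 := h1 p.n le_rfl
  rw [p.last] at h2
  have h3 : Relation.TransGen D.K Y X := by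
    rcases Relation.reflTransGen_iff_eq_or_transGen.1 h2 with h | h
    · exact absurd h hXY
    · exact h
  have h4 : ∀ i : ℕ, ∀ hi : i ≤ q.n, Relation.TransGen D.K Y (q.f ⟨i, by omega⟩) := by
    intro i
    induction i with
    | zero => intro _; rw [q.first]; exact h3
    | succ i ih =>
      intro hi
      refine K_chain_trans (ih (by omega)) ?_
      have ha : D.Adj (q.f ⟨i, by omega⟩) (q.f ⟨i + 1, by omega⟩) := q.adj ⟨i, by omega⟩
      have hb : ¬ D.CpDir (q.f ⟨i + 1, by omega⟩) (q.f ⟨i, by omega⟩) := hq ⟨i, by omega⟩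
      rw [cpDir_iff] at hb
      by_cases hk : D.K (q.f ⟨i, by omega⟩) (q.f ⟨i + 1, by omega⟩)
      · exact Or.inl hk
      · exact Or.inr ⟨ha, hk, hb⟩
  have h5 := h4 q.n le_rfl
  rw [q.last] at h5
  exact K_no_cycle h5

end Dag
end CPDAGProof
/-- For distinct `X`, `Y` in the CPDAG `G` of the MEC of a DAG, if `Y` is
an explicit ancestor of `X` in `G`, then `X` is a definite non-ancestor of `Y` in `G`
(there is no possibly directed path from `X` to `Y` in `G`). -/
theorem defNonAn_of_reverse_explAn
    {V : Type*} [Fintype V] (D : Dag V) (X Y : V) (hXY : X ≠ Y)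
    (h : D.ExplAn Y X) : ¬ D.PossAn X Y := by
  exact D.main_aux X Y hXY h
end
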